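/- arXiv:2006.00313 — 2 statements merged into one kernel-verified Lean document; each statement's English description precedes it below -/
import Mathlib

section
/- Torus diffeomorphism lemma: let α ∈ H(T^∞_{σ+ρ}, ℓ^∞) be real on real. There exists δ ∈ (0,1) such that if ρ^{-1}|α|_{σ+ρ} ≤ δ, then the map φ ↦ φ + α(φ) is an invertible diffeomorphism of T^∞_σ (with respect to the ℓ^∞ topology) and its inverse has the form θ ↦ θ + α̃(θ) with α̃ ∈ H(T^∞_{σ+ρ/2}, ℓ^∞) real on real and |α̃|_{σ+ρ/2} ≤ C |α|_{σ+ρ}. -/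
open scoped BigOperators ENNReal

noncomputable def wnorm (η : ℝ) (ℓ : ℕ →₀ ℤ) : ℝ :=
  ∑ i ∈ ℓ.support, ((i : ℝ) + 1) ^ η * |(ℓ i : ℝ)|

/-- `ℓ·φ` for φ ∈ ℂ^ℕ (finite sum). -/
noncomputable def edot (ℓ : ℕ →₀ ℤ) (φ : ℕ → ℂ) : ℂ :=
  ∑ i ∈ ℓ.support, (ℓ i : ℂ) * φ i

/-- the thickened infinite-dimensional torus `T^∞_s` : |Im φ_i| ≤ s⟨i⟩^η. -/
def Tinf (η s : ℝ) : Set (ℕ → ℂ) :=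
  {φ | ∀ i, |(φ i).im| ≤ s * ((i : ℝ) + 1) ^ η}

/-- realization of an ℓ^∞-valued Fourier series `α(φ) = Σ_ℓ a(ℓ) e^{iℓ·φ}`. -/
noncomputable def realize (a : (ℕ →₀ ℤ) → ℕ → ℂ) (φ : ℕ → ℂ) : ℕ → ℂ :=
  fun i => ∑' ℓ : ℕ →₀ ℤ, a ℓ i * Complex.exp (Complex.I * edot ℓ φ)

/-- the norm `|α|_σ = Σ_ℓ e^{σ|ℓ|_η} ‖a(ℓ)‖_{ℓ^∞}` (valued in ℝ≥0∞). -/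
noncomputable def supNormCoef (η σ : ℝ) (a : (ℕ →₀ ℤ) → ℕ → ℂ) : ℝ≥0∞ :=
  ∑' ℓ : ℕ →₀ ℤ,
    ENNReal.ofReal (Real.exp (σ * wnorm η ℓ)) * ⨆ i, (‖a ℓ i‖₊ : ℝ≥0∞)

/-- "real on real" at the level of Fourier coefficients. -/
def RealOnReal (a : (ℕ →₀ ℤ) → ℕ → ℂ) : Prop :=
  ∀ ℓ i, (starRingEnd ℂ) (a ℓ i) = a (-ℓ) i

namespace TorusDiffeo

/-- Lattice of Fourier indices. -/
abbrev Lam := ℕ →₀ ℤ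

/-- Plain `ℓ^1` sequences indexed by the lattice. -/
abbrev L1 (E : Type) [NormedAddCommGroup E] := lp (fun _ : Lam => E) 1

/-- Bounded complex sequences. -/
def Linf : Type := lp (fun _ : ℕ => ℂ) ∞

namespace Linf

noncomputable instance : NormedAddCommGroup Linf :=
  inferInstanceAs (NormedAddCommGroup (lp (fun _ : ℕ => ℂ) ∞))
noncomputable instance : NormedSpace ℂ Linf :=
  inferInstanceAs (NormedSpace ℂ (lp (fun _ : ℕ => ℂ) ∞))
instance : CompleteSpace Linf := inferInstanceAs (CompleteSpace (lp (fun _ : ℕ => ℂ) ∞))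
noncomputable instance : StarAddMonoid Linf :=
  inferInstanceAs (StarAddMonoid (lp (fun _ : ℕ => ℂ) ∞))
instance : NormedStarGroup Linf := inferInstanceAs (NormedStarGroup (lp (fun _ : ℕ => ℂ) ∞))
instance : StarModule ℂ Linf := inferInstanceAs (StarModule ℂ (lp (fun _ : ℕ => ℂ) ∞))

/-- Evaluation at a coordinate. -/
noncomputable def ev (j : ℕ) : Linf →L[ℂ] ℂ := lp.evalCLM ℂ (fun _ : ℕ => ℂ) ∞ j

theorem ev_star (j : ℕ) (v : Linf) : ev j (star v) = star (ev j v) := rfl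

theorem ev_le (j : ℕ) (v : Linf) : ‖ev j v‖ ≤ ‖v‖ :=
  lp.norm_apply_le_norm (E := fun _ : ℕ => ℂ) (by simp) v j

theorem ext {v w : Linf} (h : ∀ j, ev j v = ev j w) : v = w :=
  lp.ext (funext h)

/-- Build a bounded sequence. -/
def mk (f : ℕ → ℂ) (C : ℝ) (hf : ∀ i, ‖f i‖ ≤ C) : Linf :=
  ⟨f, memℓp_infty ⟨C, by rintro _ ⟨i, rfl⟩; exact hf i⟩⟩

theorem ev_mk (f : ℕ → ℂ) (C : ℝ) (hf : ∀ i, ‖f i‖ ≤ C) (j : ℕ) : ev j (mk f C hf) = f j := rfl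

theorem norm_le {v : Linf} {C : ℝ} (hC : 0 ≤ C) (h : ∀ j, ‖ev j v‖ ≤ C) : ‖v‖ ≤ C :=
  lp.norm_le_of_forall_le hC h

end Linf

section general

variable {E F : Type} [NormedAddCommGroup E] [NormedSpace ℂ E] [NormedAddCommGroup F]
  [NormedSpace ℂ F] [CompleteSpace F]

theorem L1_hasSum_norm {E : Type} [NormedAddCommGroup E] (x : L1 E) :
    HasSum (fun k => ‖x k‖) ‖x‖ := by
  have := lp.hasSum_norm (p := 1) (by simp) x
  simpa using this

theorem lift_summable (f : Lam → E →L[ℂ] F) (C : ℝ) (hf : ∀ k, ‖f k‖ ≤ C) (x : L1 E) :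
    Summable (fun k => f k (x k)) := by
  refine Summable.of_norm_bounded ((L1_hasSum_norm x).summable.mul_left C) fun k => ?_
  exact ((f k).le_opNorm _).trans (by gcongr; exact hf k)

/-- Bounded families of operators give operators on `ℓ^1`. -/
noncomputable def lift (f : Lam → E →L[ℂ] F) (C : ℝ) (hf : ∀ k, ‖f k‖ ≤ C) : L1 E →L[ℂ] F :=
  LinearMap.mkContinuous
    { toFun := fun x => ∑' k, f k (x k)
      map_add' := fun x y => by
        rw [← (lift_summable f C hf x).tsum_add (lift_summable f C hf y)]
        simp
      map_smul' := fun c x => by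
        simp [tsum_const_smul''] } C
    (fun x => by
      refine tsum_of_norm_bounded (g := fun k => C * ‖x k‖) ((L1_hasSum_norm x).mul_left C)
        fun k => ?_
      exact ((f k).le_opNorm _).trans (by gcongr; exact hf k))

theorem lift_apply (f : Lam → E →L[ℂ] F) (C : ℝ) (hf : ∀ k, ‖f k‖ ≤ C) (x : L1 E) :
    lift f C hf x = ∑' k, f k (x k) := rfl

theorem lift_single (f : Lam → E →L[ℂ] F) (C : ℝ) (hf : ∀ k, ‖f k‖ ≤ C) (k : Lam) (e : E) :
    lift f C hf (lp.single 1 k e) = f k e := by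
  rw [lift_apply, tsum_eq_single k]
  · rw [lp.single_apply_self]
  · intro j hj
    rw [lp.single_apply_ne _ _ _ hj, map_zero]

theorem lift_norm_le (f : Lam → E →L[ℂ] F) (C : ℝ) (hC : 0 ≤ C) (hf : ∀ k, ‖f k‖ ≤ C) :
    ‖lift f C hf‖ ≤ C :=
  LinearMap.mkContinuous_norm_le _ hC _

/-- Continuous additive maps on `ℓ^1` agreeing on singles agree. -/
theorem L1_ext {E G : Type} [NormedAddCommGroup E] [AddCommMonoid G] [TopologicalSpace G]
    [T2Space G] (f g : L1 E →+ G) (hf : Continuous f) (hg : Continuous g)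
    (h : ∀ k e, f (lp.single 1 k e) = g (lp.single 1 k e)) (x : L1 E) : f x = g x := by
  have hx := lp.hasSum_single (p := 1) (by simp) x
  have h1 := hx.map f hf
  have h2 := hx.map g hg
  have : (f ∘ fun i => lp.single 1 i (x i)) = (g ∘ fun i => lp.single 1 i (x i)) := by
    funext i; exact h i _
  rw [this] at h1
  exact h1.unique h2

theorem clm_single_one {G : Type} [NormedAddCommGroup G] [NormedSpace ℂ G] (f : L1 ℂ →L[ℂ] G)
    (k : Lam) (e : ℂ) :
    f (lp.single 1 k e) = e • f (lp.single 1 k 1) := by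
  rw [← map_smul, ← lp.single_smul]; simp

theorem exp_bound {A : Type} [NormedRing A] [NormOneClass A] [NormedAlgebra ℂ A] [CompleteSpace A]
    (x : A) :
    ‖NormedSpace.exp x‖ ≤ Real.exp ‖x‖ := by
  have h1 := NormedSpace.exp_series_hasSum_exp' (𝕂 := ℂ) x
  have h2 := NormedSpace.exp_series_hasSum_exp' (𝕂 := ℝ) ‖x‖
  rw [← Real.exp_eq_exp_ℝ] at h2
  rw [← h1.tsum_eq]
  refine tsum_of_norm_bounded h2 fun n => ?_
  rw [norm_smul]
  simp only [norm_inv, smul_eq_mul]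
  gcongr
  · simp
  · exact norm_pow_le _ _

theorem pow_sub_bound {A : Type} [NormedRing A] [NormOneClass A] (x y : A) (R : ℝ)
    (hx : ‖x‖ ≤ R) (hy : ‖y‖ ≤ R) (n : ℕ) :
    ‖x ^ (n + 1) - y ^ (n + 1)‖ ≤ (n + 1) * R ^ n * ‖x - y‖ := by
  have hR : 0 ≤ R := (norm_nonneg _).trans hx
  induction n with
  | zero => simp
  | succ n ih =>
    have : x ^ (n + 1 + 1) - y ^ (n + 1 + 1) =
        (x ^ (n + 1) - y ^ (n + 1)) * x + y ^ (n + 1) * (x - y) := by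
      rw [pow_succ x, pow_succ y]; noncomm_ring
    rw [this]
    calc _ ≤ ‖(x ^ (n + 1) - y ^ (n + 1))‖ * ‖x‖ + ‖y ^ (n + 1)‖ * ‖x - y‖ :=
          (norm_add_le _ _).trans (add_le_add (norm_mul_le _ _) (norm_mul_le _ _))
      _ ≤ ((n + 1) * R ^ n * ‖x - y‖) * R + R ^ (n + 1) * ‖x - y‖ := by
          gcongr
          exact (norm_pow_le _ _).trans (by gcongr)
      _ = _ := by push_cast; ring

theorem exp_sub_bound {A : Type} [NormedRing A] [NormOneClass A] [NormedAlgebra ℂ A]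
    [CompleteSpace A] (x y : A) (R : ℝ) (hx : ‖x‖ ≤ R) (hy : ‖y‖ ≤ R) :
    ‖NormedSpace.exp x - NormedSpace.exp y‖ ≤ ‖x - y‖ * Real.exp R := by
  have h1 := (NormedSpace.exp_series_hasSum_exp' (𝕂 := ℂ) x).sub
    (NormedSpace.exp_series_hasSum_exp' (𝕂 := ℂ) y)
  have h2 := (NormedSpace.exp_series_hasSum_exp' (𝕂 := ℝ) R).mul_left ‖x - y‖
  rw [← Real.exp_eq_exp_ℝ] at h2
  rw [← hasSum_nat_add_iff' 1] at h1
  simp only [Finset.range_one, Finset.sum_singleton, pow_zero, sub_self, sub_zero] at h1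
  rw [← h1.tsum_eq]
  refine tsum_of_norm_bounded h2 fun n => ?_
  rw [← smul_sub, norm_smul]
  have := pow_sub_bound x y R hx hy n
  have hn : ‖(((n + 1).factorial : ℂ))⁻¹‖ = ((n + 1 : ℝ))⁻¹ * ((n.factorial : ℝ))⁻¹ := by
    rw [norm_inv, Nat.factorial_succ, ← mul_inv]
    simp
    norm_cast
    exact Or.inl rfl
  rw [hn]
  calc _ ≤ ((n + 1 : ℝ))⁻¹ * ((n.factorial : ℝ))⁻¹ * ((n + 1) * R ^ n * ‖x - y‖) := by gcongr
    _ = _ := by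
      simp only [smul_eq_mul]
      field_simp

/-- Intertwining passes to exponentials. -/
theorem exp_intertwine {E F : Type} [NormedAddCommGroup E] [NormedSpace ℂ E] [CompleteSpace E]
    [NormedAddCommGroup F] [NormedSpace ℂ F] [CompleteSpace F]
    (f : E →+ F) (hf : Continuous f) (D : E →L[ℂ] E) (D' : F →L[ℂ] F)
    (h : ∀ v, f (D v) = D' (f v)) (v : E) :
    f (NormedSpace.exp D v) = NormedSpace.exp D' (f v) := by
  have h1 := ((NormedSpace.exp_series_hasSum_exp' (𝕂 := ℂ) D).mapL
    (ContinuousLinearMap.apply ℂ E v)).map f hf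
  have h2 := (NormedSpace.exp_series_hasSum_exp' (𝕂 := ℂ) D').mapL
    (ContinuousLinearMap.apply ℂ F (f v))
  have hp : ∀ n : ℕ, ∀ v, f ((D ^ n) v) = (D' ^ n) (f v) := by
    intro n
    induction n with
    | zero => intro v; simp
    | succ n ih =>
      intro v
      rw [pow_succ, pow_succ, mul_apply_eq_comp, mul_apply_eq_comp, ih, h]
  suffices h3 : (fun b : ℕ => ((ContinuousLinearMap.apply ℂ F) (f v)) ((b.factorial : ℂ)⁻¹ • D' ^ b)) =
      (f ∘ fun b : ℕ => ((ContinuousLinearMap.apply ℂ E) v) ((b.factorial : ℂ)⁻¹ • D ^ b)) by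
    rw [h3] at h2
    exact h1.unique h2
  funext n
  simp only [Function.comp, ContinuousLinearMap.apply_apply, smul_apply]
  rw [map_inv_natCast_smul f ℂ ℂ, hp]

end general

section general2

theorem L1_ext_fun {E G : Type} [NormedAddCommGroup E] [AddCommGroup G] [TopologicalSpace G]
    [T2Space G] (f g : L1 E → G) (hfa : ∀ x y, f (x + y) = f x + f y)
    (hga : ∀ x y, g (x + y) = g x + g y) (hf : Continuous f) (hg : Continuous g)
    (h : ∀ k e, f (lp.single 1 k e) = g (lp.single 1 k e)) (x : L1 E) : f x = g x :=
  L1_ext (AddMonoidHom.mk' f hfa) (AddMonoidHom.mk' g hga) hf hg h x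

/-- Basis vector. -/
noncomputable def ee (k : Lam) : L1 ℂ := lp.single 1 k 1

theorem norm_ee (k : Lam) : ‖ee k‖ = 1 := by
  rw [ee, lp.norm_single (by simp)]; simp

instance : Nontrivial (L1 ℂ) := ⟨ee 0, 0, fun h => by
  have := norm_ee 0
  rw [h] at this
  simp at this⟩

theorem L1_ext_clm {F : Type} [NormedAddCommGroup F] [NormedSpace ℂ F] (f g : L1 ℂ →L[ℂ] F)
    (h : ∀ k, f (ee k) = g (ee k)) (x : L1 ℂ) : f x = g x := by
  refine L1_ext_fun f g (map_add f) (map_add g) f.continuous g.continuous (fun k e => ?_) x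
  rw [clm_single_one f, clm_single_one g]
  have := h k
  unfold ee at this
  rw [this]

theorem L1_ext_clm' {E F : Type} [NormedAddCommGroup E] [NormedSpace ℂ E]
    [NormedAddCommGroup F] [NormedSpace ℂ F] (f g : L1 E →L[ℂ] F)
    (h : ∀ k e, f (lp.single 1 k e) = g (lp.single 1 k e)) (x : L1 E) : f x = g x :=
  L1_ext_fun f g (map_add f) (map_add g) f.continuous g.continuous h x

/-- Singles as continuous linear maps. -/
noncomputable def sing {E : Type} [NormedAddCommGroup E] [NormedSpace ℂ E] (k : Lam) :
    E →L[ℂ] L1 E := lp.singleContinuousLinearMap ℂ (fun _ : Lam => E) 1 k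

theorem sing_apply {E : Type} [NormedAddCommGroup E] [NormedSpace ℂ E] (k : Lam) (x : E) :
    sing k x = lp.single 1 k x := rfl

theorem sing_norm {E : Type} [NormedAddCommGroup E] [NormedSpace ℂ E] (k : Lam) :
    ‖(sing k : E →L[ℂ] L1 E)‖ ≤ 1 := by
  refine ContinuousLinearMap.opNorm_le_bound _ zero_le_one fun x => ?_
  rw [sing_apply, lp.norm_single (by simp), one_mul]

variable {E : Type} [NormedAddCommGroup E] [NormedSpace ℂ E] [CompleteSpace E]

/-- Reflection. -/
noncomputable def refl1 : L1 E →L[ℂ] L1 E := lift (fun k => sing (-k)) 1 fun _ => sing_norm _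

theorem refl1_single (k : Lam) (x : E) : refl1 (lp.single 1 k x) = lp.single 1 (-k) x := by
  rw [refl1, lift_single, sing_apply]

theorem refl1_apply (x : L1 E) (k : Lam) : refl1 x k = x (-k) := by
  refine L1_ext_clm' ((lp.evalCLM ℂ (fun _ : Lam => E) 1 k).comp refl1)
    (lp.evalCLM ℂ (fun _ : Lam => E) 1 (-k)) (fun j e => ?_) x
  change (refl1 (lp.single 1 j e)) k = (lp.single 1 j e : L1 E) (-k)
  rw [refl1_single, lp.single_apply, lp.single_apply, Pi.single_apply, Pi.single_apply]
  simp only [neg_eq_iff_eq_neg, eq_neg_iff_add_eq_zero]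

theorem refl1_norm_le (x : L1 E) : ‖refl1 x‖ ≤ ‖x‖ := by
  have := (refl1 : L1 E →L[ℂ] L1 E).le_of_opNorm_le (lift_norm_le _ 1 zero_le_one _) x
  rwa [one_mul] at this

variable [StarAddMonoid E] [NormedStarGroup E]

/-- The conjugation `b ↦ (ℓ ↦ conj b(-ℓ))`. -/
noncomputable def JJ (x : L1 E) : L1 E := star (refl1 x)

theorem JJ_apply (x : L1 E) (k : Lam) : JJ x k = star (x (-k)) := by
  rw [JJ, lp.star_apply, refl1_apply]

theorem JJ_single (k : Lam) (x : E) : JJ (lp.single 1 k x) = lp.single 1 (-k) (star x) := by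
  rw [JJ, refl1_single]
  ext j
  rw [lp.star_apply, lp.single_apply, lp.single_apply, Pi.single_apply, Pi.single_apply]
  split_ifs <;> simp

theorem JJ_add (x y : L1 E) : JJ (x + y) = JJ x + JJ y := by simp [JJ]

theorem JJ_cont : Continuous (JJ : L1 E → L1 E) :=
  continuous_star.comp (refl1 : L1 E →L[ℂ] L1 E).continuous

theorem JJ_norm_le (x : L1 E) : ‖JJ x‖ ≤ ‖x‖ := by
  rw [JJ, norm_star]; exact refl1_norm_le x

theorem JJ_smul [StarModule ℂ E] (c : ℂ) (x : L1 E) : JJ (c • x) = star c • JJ x := by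
  rw [JJ, map_smul, star_smul, JJ]

end general2

section comps

/-- Component of an `ℓ^∞`-valued series. -/
noncomputable def comp (j : ℕ) : L1 Linf →L[ℂ] L1 ℂ :=
  lift (fun k => (sing k).comp (Linf.ev j)) 1 fun k => by
    refine ContinuousLinearMap.opNorm_le_bound _ zero_le_one fun x => ?_
    rw [ContinuousLinearMap.comp_apply, sing_apply, lp.norm_single (by simp), one_mul]
    exact Linf.ev_le j x

theorem comp_norm (j : ℕ) : ‖comp j‖ ≤ 1 := lift_norm_le _ _ zero_le_one _

theorem comp_single (j : ℕ) (k : Lam) (v : Linf) :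
    comp j (lp.single 1 k v) = (lp.single 1 k (Linf.ev j v) : L1 ℂ) := by
  rw [comp, lift_single]; rfl

theorem comp_apply (j : ℕ) (b : L1 Linf) (k : Lam) : comp j b k = Linf.ev j (b k) := by
  refine L1_ext_clm' ((lp.evalCLM ℂ (fun _ : Lam => ℂ) 1 k).comp (comp j))
    ((Linf.ev j).comp (lp.evalCLM ℂ (fun _ : Lam => Linf) 1 k))
      (fun i e => ?_) b
  change (comp j (lp.single 1 i e)) k = Linf.ev j ((lp.single 1 i e : L1 Linf) k)
  rw [comp_single, lp.single_apply, lp.single_apply, Pi.single_apply, Pi.single_apply]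
  split_ifs <;> simp

theorem comp_JJ (j : ℕ) (b : L1 Linf) : comp j (JJ b) = JJ (comp j b) := by
  ext k
  rw [comp_apply, JJ_apply, JJ_apply, comp_apply, Linf.ev_star]

/-- Tensor `v ⊗ u`. -/
noncomputable def tens (v : Linf) : L1 ℂ →L[ℂ] L1 Linf :=
  lift (fun k => ContinuousLinearMap.toSpanSingleton ℂ (lp.single 1 k v : L1 Linf)) ‖v‖ fun k => by
    rw [ContinuousLinearMap.norm_toSpanSingleton, lp.norm_single (by simp)]

theorem tens_norm (v : Linf) : ‖tens v‖ ≤ ‖v‖ := lift_norm_le _ _ (norm_nonneg _) _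

theorem tens_single (v : Linf) (k : Lam) (e : ℂ) :
    tens v (lp.single 1 k e) = lp.single 1 k (e • v) := by
  rw [tens, lift_single, ContinuousLinearMap.toSpanSingleton_apply, lp.single_smul]

theorem comp_tens (j : ℕ) (v : Linf) (u : L1 ℂ) : comp j (tens v u) = Linf.ev j v • u := by
  refine L1_ext_clm ((comp j).comp (tens v)) (Linf.ev j v • ContinuousLinearMap.id ℂ _) (fun k => ?_) u
  change comp j (tens v (ee k)) = Linf.ev j v • ee k
  rw [ee, tens_single, comp_single, ← lp.single_smul]
  simp

theorem JJ_tens (v : Linf) (u : L1 ℂ) : JJ (tens v u) = tens (star v) (JJ u) := by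
  refine L1_ext_fun (fun u => JJ (tens v u)) (fun u => tens (star v) (JJ u))
    (fun x y => by simp [JJ_add]) (fun x y => by simp [JJ_add])
    (JJ_cont.comp (tens v).continuous) ((tens _).continuous.comp JJ_cont) (fun k e => ?_) u
  rw [tens_single, JJ_single, JJ_single, tens_single, star_smul]

end comps

section weights

variable {η : ℝ}

theorem wnorm_eq_sum (ℓ : Lam) (S : Finset ℕ) (hS : ℓ.support ⊆ S) :
    wnorm η ℓ = ∑ i ∈ S, ((i : ℝ) + 1) ^ η * |(ℓ i : ℝ)| := by
  rw [wnorm]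
  refine Finset.sum_subset hS fun i _ hi => ?_
  rw [Finsupp.notMem_support_iff.mp hi]; simp

theorem edot_eq_sum (ℓ : Lam) (φ : ℕ → ℂ) (S : Finset ℕ) (hS : ℓ.support ⊆ S) :
    edot ℓ φ = ∑ i ∈ S, (ℓ i : ℂ) * φ i := by
  rw [edot]
  refine Finset.sum_subset hS fun i _ hi => ?_
  rw [Finsupp.notMem_support_iff.mp hi]; simp

theorem base_pos (i : ℕ) : 0 < ((i : ℝ) + 1) ^ η := Real.rpow_pos_of_pos (by positivity) _

theorem one_le_base (hη : 0 < η) (i : ℕ) : 1 ≤ ((i : ℝ) + 1) ^ η :=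
  Real.one_le_rpow (by simp) hη.le

theorem wnorm_nonneg (ℓ : Lam) : 0 ≤ wnorm η ℓ :=
  Finset.sum_nonneg fun i _ => mul_nonneg (base_pos i).le (abs_nonneg _)

theorem wnorm_add_le (k m : Lam) : wnorm η (k + m) ≤ wnorm η k + wnorm η m := by
  rw [wnorm_eq_sum (k + m) (k.support ∪ m.support) Finsupp.support_add,
    wnorm_eq_sum k (k.support ∪ m.support) Finset.subset_union_left,
    wnorm_eq_sum m (k.support ∪ m.support) Finset.subset_union_right, ← Finset.sum_add_distrib]
  refine Finset.sum_le_sum fun i _ => ?_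
  rw [← mul_add]
  refine mul_le_mul_of_nonneg_left ?_ (base_pos i).le
  simp only [Finsupp.add_apply, Int.cast_add]
  exact abs_add_le _ _

theorem wnorm_neg (k : Lam) : wnorm η (-k) = wnorm η k := by
  simp [wnorm]

theorem edot_add (k m : Lam) (φ : ℕ → ℂ) : edot (k + m) φ = edot k φ + edot m φ := by
  rw [edot_eq_sum (k + m) φ (k.support ∪ m.support) Finsupp.support_add,
    edot_eq_sum k φ (k.support ∪ m.support) Finset.subset_union_left,
    edot_eq_sum m φ (k.support ∪ m.support) Finset.subset_union_right, ← Finset.sum_add_distrib]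
  refine Finset.sum_congr rfl fun i _ => ?_
  simp only [Finsupp.add_apply, Int.cast_add]
  ring

theorem edot_add_right (k : Lam) (φ ψ : ℕ → ℂ) :
    edot k (fun i => φ i + ψ i) = edot k φ + edot k ψ := by
  simp only [edot, mul_add, Finset.sum_add_distrib]

theorem edot_sub_right (k : Lam) (φ ψ : ℕ → ℂ) :
    edot k φ - edot k ψ = edot k (fun i => φ i - ψ i) := by
  simp only [edot, mul_sub, Finset.sum_sub_distrib]

theorem edot_norm_le (hη : 0 < η) (k : Lam) (φ : ℕ → ℂ) (d : ℝ) (hd : ∀ i, ‖φ i‖ ≤ d) :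
    ‖edot k φ‖ ≤ wnorm η k * d := by
  have hd0 : 0 ≤ d := (norm_nonneg _).trans (hd 0)
  rw [edot, wnorm, Finset.sum_mul]
  refine norm_sum_le_of_le _ fun i _ => ?_
  rw [norm_mul, Complex.norm_intCast]
  refine mul_le_mul ?_ (hd i) (norm_nonneg _) (mul_nonneg (base_pos i).le (abs_nonneg _))
  exact le_mul_of_one_le_left (abs_nonneg _) (one_le_base hη i)

theorem edot_im_le (s : ℝ) (k : Lam) (φ : ℕ → ℂ) (hφ : φ ∈ Tinf η s) :
    |(edot k φ).im| ≤ s * wnorm η k := by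
  rw [edot, wnorm, Complex.im_sum, Finset.mul_sum]
  refine (Finset.abs_sum_le_sum_abs _ _).trans (Finset.sum_le_sum fun i _ => ?_)
  have h1 := hφ i
  have : ((k i : ℂ) * φ i).im = (k i : ℝ) * (φ i).im := by simp
  rw [this, abs_mul]
  calc _ ≤ |(k i : ℝ)| * (s * ((i : ℝ) + 1) ^ η) := by gcongr
    _ = _ := by ring

theorem char_norm_le (s : ℝ) (k : Lam) (φ : ℕ → ℂ) (hφ : φ ∈ Tinf η s) :
    ‖Complex.exp (Complex.I * edot k φ)‖ ≤ Real.exp (s * wnorm η k) := by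
  rw [Complex.norm_exp]
  have := (abs_le.mp (edot_im_le s k φ hφ)).1
  simp
  linarith

variable (η) in
/-- The exponential weight. -/
noncomputable def wt (s : ℝ) (k : Lam) : ℝ := Real.exp (s * wnorm η k)

theorem wt_pos (s : ℝ) (k : Lam) : 0 < wt η s k := Real.exp_pos _

theorem wt_neg (s : ℝ) (k : Lam) : wt η s (-k) = wt η s k := by rw [wt, wt, wnorm_neg]

variable (η) in
/-- The cocycle. -/
noncomputable def coc (s : ℝ) (k m : Lam) : ℝ := wt η s (k + m) / (wt η s k * wt η s m)

theorem coc_nonneg (s : ℝ) (k m : Lam) : 0 ≤ coc η s k m :=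
  div_nonneg (wt_pos _ _).le (mul_nonneg (wt_pos _ _).le (wt_pos _ _).le)

theorem coc_le (s : ℝ) (hs : 0 ≤ s) (k m : Lam) : coc η s k m ≤ 1 := by
  rw [coc, div_le_one (mul_pos (wt_pos _ _) (wt_pos _ _)), wt, wt, wt, ← Real.exp_add, ← mul_add]
  exact Real.exp_le_exp.mpr (mul_le_mul_of_nonneg_left (wnorm_add_le k m) hs)

theorem coc_neg (s : ℝ) (k m : Lam) : coc η s (-k) (-m) = coc η s k m := by
  rw [coc, coc, ← neg_add, wt_neg, wt_neg, wt_neg]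

variable (η) in
/-- Twisted shift. -/
noncomputable def shf (s : ℝ) (hs : 0 ≤ s) (k : Lam) : L1 ℂ →L[ℂ] L1 ℂ :=
  lift (fun m => (coc η s k m : ℂ) • sing (k + m)) 1 fun m => by
    rw [norm_smul, Complex.norm_real, Real.norm_of_nonneg (coc_nonneg s k m)]
    exact mul_le_one₀ (coc_le s hs k m) (norm_nonneg _) (sing_norm _)

theorem shf_norm (s : ℝ) (hs : 0 ≤ s) (k : Lam) : ‖shf η s hs k‖ ≤ 1 :=
  lift_norm_le _ _ zero_le_one _

theorem shf_single (s : ℝ) (hs : 0 ≤ s) (k m : Lam) (e : ℂ) :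
    shf η s hs k (lp.single 1 m e) = (coc η s k m : ℂ) • (lp.single 1 (k + m) e : L1 ℂ) := by
  rw [shf, lift_single]; rfl

variable (η) in
/-- Twisted convolution. -/
noncomputable def conv (s : ℝ) (hs : 0 ≤ s) : L1 ℂ →L[ℂ] (L1 ℂ →L[ℂ] L1 ℂ) :=
  lift (fun k => ContinuousLinearMap.toSpanSingleton ℂ (shf η s hs k)) 1 fun k => by
    rw [ContinuousLinearMap.norm_toSpanSingleton]
    exact shf_norm s hs k

theorem conv_norm (s : ℝ) (hs : 0 ≤ s) : ‖conv η s hs‖ ≤ 1 := lift_norm_le _ _ zero_le_one _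

theorem conv_single (s : ℝ) (hs : 0 ≤ s) (k m : Lam) (d e : ℂ) :
    conv η s hs (lp.single 1 k d) (lp.single 1 m e) =
      (coc η s k m : ℂ) • (lp.single 1 (k + m) (d * e) : L1 ℂ) := by
  rw [conv, lift_single, ContinuousLinearMap.toSpanSingleton_apply, smul_apply,
    shf_single, smul_comm, ← lp.single_smul, smul_eq_mul]

theorem JJ_conv (s : ℝ) (hs : 0 ≤ s) (u v : L1 ℂ) :
    JJ (conv η s hs u v) = conv η s hs (JJ u) (JJ v) := by
  refine L1_ext_fun (fun u => JJ (conv η s hs u v)) (fun u => conv η s hs (JJ u) (JJ v))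
    (fun x y => by simp [JJ_add]) (fun x y => by simp [JJ_add])
    (JJ_cont.comp ((conv η s hs).flip v).continuous)
    (((conv η s hs).flip (JJ v)).continuous.comp JJ_cont) (fun k d => ?_) u
  refine L1_ext_fun (fun v => JJ (conv η s hs (lp.single 1 k d) v))
    (fun v => conv η s hs (JJ (lp.single 1 k d)) (JJ v))
    (fun x y => by simp [JJ_add]) (fun x y => by simp [JJ_add])
    (JJ_cont.comp ((conv η s hs) _).continuous)
    (((conv η s hs) _).continuous.comp JJ_cont) (fun m e => ?_) v
  rw [conv_single, JJ_smul, JJ_single, JJ_single, JJ_single, conv_single, coc_neg, star_mul',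
    neg_add]
  simp

/-- The character of evaluation at a point of the thick torus. -/
noncomputable def chi (s : ℝ) (θ : ℕ → ℂ) (hθ : θ ∈ Tinf η s) : L1 ℂ →L[ℂ] ℂ :=
  lift (fun k => ContinuousLinearMap.toSpanSingleton ℂ
    (Complex.exp (Complex.I * edot k θ) / (wt η s k : ℂ))) 1 fun k => by
    rw [ContinuousLinearMap.norm_toSpanSingleton, norm_div, Complex.norm_real,
      Real.norm_of_nonneg (wt_pos s k).le, div_le_one (wt_pos s k)]
    exact char_norm_le s k θ hθ

theorem chi_apply (s : ℝ) (θ : ℕ → ℂ) (hθ : θ ∈ Tinf η s) (u : L1 ℂ) :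
    chi s θ hθ u = ∑' k, u k / (wt η s k : ℂ) * Complex.exp (Complex.I * edot k θ) := by
  rw [chi, lift_apply]
  refine tsum_congr fun k => ?_
  rw [ContinuousLinearMap.toSpanSingleton_apply, smul_eq_mul]
  ring

theorem chi_norm_le (s : ℝ) (θ : ℕ → ℂ) (hθ : θ ∈ Tinf η s) (u : L1 ℂ) :
    ‖chi s θ hθ u‖ ≤ ‖u‖ := by
  have := (chi s θ hθ).le_of_opNorm_le (lift_norm_le _ 1 zero_le_one _) u
  rwa [one_mul] at this

theorem chi_ee (s : ℝ) (θ : ℕ → ℂ) (hθ : θ ∈ Tinf η s) (k : Lam) :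
    chi s θ hθ (ee k) = Complex.exp (Complex.I * edot k θ) / (wt η s k : ℂ) := by
  rw [ee, chi, lift_single, ContinuousLinearMap.toSpanSingleton_apply, one_smul]

theorem chi_conv (s : ℝ) (hs : 0 ≤ s) (θ : ℕ → ℂ) (hθ : θ ∈ Tinf η s) (u v : L1 ℂ) :
    chi s θ hθ (conv η s hs u v) = chi s θ hθ u * chi s θ hθ v := by
  refine L1_ext_clm ((chi s θ hθ).comp ((conv η s hs).flip v))
    ((ContinuousLinearMap.toSpanSingleton ℂ (chi s θ hθ v)).comp (chi s θ hθ)) (fun k => ?_) u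
  change chi s θ hθ (conv η s hs (ee k) v) = chi s θ hθ (ee k) * chi s θ hθ v
  refine L1_ext_clm ((chi s θ hθ).comp ((conv η s hs) (ee k)))
    (chi s θ hθ (ee k) • (chi s θ hθ)) (fun m => ?_) v
  change chi s θ hθ (conv η s hs (ee k) (ee m)) = chi s θ hθ (ee k) * chi s θ hθ (ee m)
  have h1 : conv η s hs (ee k) (ee m) = (coc η s k m : ℂ) • ee (k + m) := by
    rw [ee, ee, conv_single, one_mul, ee]
  rw [h1, map_smul, chi_ee, chi_ee, chi_ee, edot_add, mul_add, Complex.exp_add, coc, smul_eq_mul]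
  have h1 : (wt η s k : ℂ) ≠ 0 := by exact_mod_cast (wt_pos s k).ne'
  have h2 : (wt η s m : ℂ) ≠ 0 := by exact_mod_cast (wt_pos s m).ne'
  have h3 : (wt η s (k + m) : ℂ) ≠ 0 := by exact_mod_cast (wt_pos s _).ne'
  push_cast
  field_simp

variable (η) in
/-- Multiplication by `i ℓ·b`. -/
noncomputable def DD (s : ℝ) (hs : 0 ≤ s) (ℓ : Lam) (b : L1 Linf) : L1 ℂ →L[ℂ] L1 ℂ :=
  ∑ j ∈ ℓ.support, (Complex.I * (ℓ j : ℂ)) • conv η s hs (comp j b)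

theorem DD_sub (s : ℝ) (hs : 0 ≤ s) (ℓ : Lam) (b b' : L1 Linf) :
    DD η s hs ℓ b - DD η s hs ℓ b' = DD η s hs ℓ (b - b') := by
  simp only [DD, map_sub, smul_sub, Finset.sum_sub_distrib]

theorem DD_norm (hη : 0 < η) (s : ℝ) (hs : 0 ≤ s) (ℓ : Lam) (b : L1 Linf) :
    ‖DD η s hs ℓ b‖ ≤ wnorm η ℓ * ‖b‖ := by
  rw [DD, wnorm, Finset.sum_mul]
  refine norm_sum_le_of_le _ fun i _ => ?_
  rw [norm_smul, norm_mul, Complex.norm_intCast, Complex.norm_I, one_mul]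
  have h1 : ‖conv η s hs (comp i b)‖ ≤ ‖b‖ := by
    have h2 := (conv η s hs).le_of_opNorm_le (conv_norm s hs) (comp i b)
    have h3 := (comp i).le_of_opNorm_le (comp_norm i) b
    linarith
  refine mul_le_mul ?_ h1 (norm_nonneg _) (mul_nonneg (base_pos i).le (abs_nonneg _))
  exact le_mul_of_one_le_left (abs_nonneg _) (one_le_base hη i)

theorem chi_DD (s : ℝ) (hs : 0 ≤ s) (θ : ℕ → ℂ) (hθ : θ ∈ Tinf η s) (ℓ : Lam) (b : L1 Linf)
    (v : L1 ℂ) : chi s θ hθ (DD η s hs ℓ b v) =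
      (Complex.I * edot ℓ (fun j => chi s θ hθ (comp j b))) * chi s θ hθ v := by
  rw [DD, sum_apply, map_sum, edot, Finset.mul_sum, Finset.sum_mul]
  refine Finset.sum_congr rfl fun j _ => ?_
  rw [smul_apply, map_smul, chi_conv, smul_eq_mul]
  ring

theorem chi_exp (s : ℝ) (hs : 0 ≤ s) (θ : ℕ → ℂ) (hθ : θ ∈ Tinf η s) (ℓ : Lam) (b : L1 Linf)
    (v : L1 ℂ) : chi s θ hθ (NormedSpace.exp (DD η s hs ℓ b) v) =
      Complex.exp (Complex.I * edot ℓ (fun j => chi s θ hθ (comp j b))) * chi s θ hθ v := by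
  have := exp_intertwine (chi s θ hθ : L1 ℂ →+ ℂ) (chi s θ hθ).continuous (DD η s hs ℓ b)
    (algebraMap ℂ (ℂ →L[ℂ] ℂ) (Complex.I * edot ℓ (fun j => chi s θ hθ (comp j b))))
    (fun v => by
      rw [Algebra.algebraMap_eq_smul_one]
      exact chi_DD s hs θ hθ ℓ b v) v
  rw [← NormedSpace.algebraMap_exp_comm, Algebra.algebraMap_eq_smul_one,
    ← Complex.exp_eq_exp_ℂ] at this
  exact this

theorem JJ_DD (s : ℝ) (hs : 0 ≤ s) (ℓ : Lam) (b : L1 Linf) (v : L1 ℂ) :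
    JJ (DD η s hs ℓ b v) = DD η s hs (-ℓ) (JJ b) (JJ v) := by
  have hsum : ∀ (S : Finset ℕ) (f : ℕ → L1 ℂ), JJ (∑ j ∈ S, f j) = ∑ j ∈ S, JJ (f j) :=
    fun S f => map_sum (AddMonoidHom.mk' (JJ : L1 ℂ → L1 ℂ) JJ_add) f S
  rw [DD, DD, sum_apply, sum_apply, hsum, Finsupp.support_neg]
  refine Finset.sum_congr rfl fun j _ => ?_
  rw [smul_apply, smul_apply, JJ_smul, JJ_conv, comp_JJ]
  simp

theorem JJ_exp (s : ℝ) (hs : 0 ≤ s) (ℓ : Lam) (b : L1 Linf) (v : L1 ℂ) :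
    JJ (NormedSpace.exp (DD η s hs ℓ b) v) = NormedSpace.exp (DD η s hs (-ℓ) (JJ b)) (JJ v) :=
  exp_intertwine (AddMonoidHom.mk' (JJ : L1 ℂ → L1 ℂ) JJ_add) JJ_cont _ _
    (fun v => JJ_DD s hs ℓ b v) v

end weights

section fixed

variable {η : ℝ}

variable (η) in
/-- One term of the composition operator. -/
noncomputable def tm (s : ℝ) (hs : 0 ≤ s) (A : Lam → Linf) (b : L1 Linf) (ℓ : Lam) : L1 Linf :=
  (wt η s ℓ : ℂ) • tens (A ℓ) (NormedSpace.exp (DD η s hs ℓ b) (ee ℓ))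

variable (η) in
/-- The fixed point map `b ↦ -a ∘ (id + b)`. -/
noncomputable def FF (s : ℝ) (hs : 0 ≤ s) (A : Lam → Linf) (b : L1 Linf) : L1 Linf :=
  -∑' ℓ, tm η s hs A b ℓ

theorem tm_aux (s : ℝ) (A : Lam → Linf) (ℓ : Lam) (T : L1 ℂ →L[ℂ] L1 ℂ) (R : ℝ)
    (hT : ‖T‖ ≤ R) : ‖(wt η s ℓ : ℂ) • tens (A ℓ) (T (ee ℓ))‖ ≤ wt η s ℓ * (‖A ℓ‖ * R) := by
  rw [norm_smul, Complex.norm_real, Real.norm_of_nonneg (wt_pos s ℓ).le]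
  refine mul_le_mul_of_nonneg_left ?_ (wt_pos s ℓ).le
  have h1 := (tens (A ℓ)).le_of_opNorm_le (tens_norm _) (T (ee ℓ))
  have h2 := T.le_of_opNorm_le hT (ee ℓ)
  rw [norm_ee, mul_one] at h2
  exact h1.trans (mul_le_mul_of_nonneg_left h2 (norm_nonneg _))

theorem tm_norm (hη : 0 < η) (σ ρ : ℝ) (hs : 0 ≤ σ + ρ / 2)
    (A : Lam → Linf) (b : L1 Linf) (hb : ‖b‖ ≤ ρ / 16) (hρ : 0 < ρ) (ℓ : Lam) :
    ‖tm η (σ + ρ / 2) hs A b ℓ‖ ≤ Real.exp ((σ + ρ) * wnorm η ℓ) * ‖A ℓ‖ := by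
  have hw := wnorm_nonneg (η := η) ℓ
  have h1 : ‖NormedSpace.exp (DD η (σ + ρ / 2) hs ℓ b)‖ ≤ Real.exp (ρ / 2 * wnorm η ℓ) := by
    refine (exp_bound _).trans (Real.exp_le_exp.mpr ((DD_norm hη _ hs ℓ b).trans ?_))
    rw [mul_comm]
    exact mul_le_mul_of_nonneg_right (by linarith) hw
  refine (tm_aux _ A ℓ _ _ h1).trans (le_of_eq ?_)
  rw [wt, mul_left_comm, ← Real.exp_add, mul_comm]
  congr 2
  ring

theorem tm_sub_norm (hη : 0 < η) (σ ρ : ℝ) (hs : 0 ≤ σ + ρ / 2)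
    (A : Lam → Linf) (b b' : L1 Linf) (hb : ‖b‖ ≤ ρ / 16) (hb' : ‖b'‖ ≤ ρ / 16) (hρ : 0 < ρ)
    (ℓ : Lam) :
    ‖tm η (σ + ρ / 2) hs A b ℓ - tm η (σ + ρ / 2) hs A b' ℓ‖ ≤
      8 / ρ * ‖b - b'‖ * (Real.exp ((σ + ρ) * wnorm η ℓ) * ‖A ℓ‖) := by
  have hw := wnorm_nonneg (η := η) ℓ
  have h1 : ‖NormedSpace.exp (DD η (σ + ρ / 2) hs ℓ b) -
      NormedSpace.exp (DD η (σ + ρ / 2) hs ℓ b')‖ ≤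
        8 / ρ * ‖b - b'‖ * Real.exp (ρ / 2 * wnorm η ℓ) := by
    refine (exp_sub_bound _ _ (wnorm η ℓ * (ρ / 16))
      ((DD_norm hη _ hs ℓ b).trans (by gcongr))
      ((DD_norm hη _ hs ℓ b').trans (by gcongr))).trans ?_
    rw [DD_sub]
    have h2 : wnorm η ℓ ≤ 8 / ρ * Real.exp (ρ / 8 * wnorm η ℓ) := by
      have := Real.add_one_le_exp (ρ / 8 * wnorm η ℓ)
      calc wnorm η ℓ = 8 / ρ * (ρ / 8 * wnorm η ℓ) := by field_simp
        _ ≤ _ := by gcongr; linarith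
    calc _ ≤ (wnorm η ℓ * ‖b - b'‖) * Real.exp (wnorm η ℓ * (ρ / 16)) := by
          gcongr; exact DD_norm hη _ hs ℓ _
      _ ≤ (8 / ρ * Real.exp (ρ / 8 * wnorm η ℓ) * ‖b - b'‖) *
          Real.exp (wnorm η ℓ * (ρ / 16)) := by gcongr
      _ = 8 / ρ * ‖b - b'‖ * Real.exp (ρ / 8 * wnorm η ℓ + wnorm η ℓ * (ρ / 16)) := by
          rw [Real.exp_add]; ring
      _ ≤ _ := by
          gcongr
          nlinarith [mul_nonneg hρ.le hw]
  have h3 : tm η (σ + ρ / 2) hs A b ℓ - tm η (σ + ρ / 2) hs A b' ℓ =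
      (wt η (σ + ρ / 2) ℓ : ℂ) • tens (A ℓ) ((NormedSpace.exp (DD η (σ + ρ / 2) hs ℓ b) -
      NormedSpace.exp (DD η (σ + ρ / 2) hs ℓ b')) (ee ℓ)) := by
    rw [tm, tm, ← smul_sub, ← map_sub, sub_apply]
  rw [h3]
  refine (tm_aux _ A ℓ _ _ h1).trans (le_of_eq ?_)
  rw [wt, show (σ + ρ) * wnorm η ℓ = (σ + ρ / 2) * wnorm η ℓ + ρ / 2 * wnorm η ℓ by ring,
    Real.exp_add]
  ring

theorem tm_summable (hη : 0 < η) (σ ρ : ℝ) (hs : 0 ≤ σ + ρ / 2)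
    (A : Lam → Linf) (b : L1 Linf) (hb : ‖b‖ ≤ ρ / 16) (hρ : 0 < ρ)
    (hA : Summable fun ℓ => Real.exp ((σ + ρ) * wnorm η ℓ) * ‖A ℓ‖) :
    Summable (tm η (σ + ρ / 2) hs A b) :=
  Summable.of_norm_bounded hA fun ℓ => tm_norm hη σ ρ hs A b hb hρ ℓ

theorem FF_norm (hη : 0 < η) (σ ρ : ℝ) (hs : 0 ≤ σ + ρ / 2)
    (A : Lam → Linf) (b : L1 Linf) (hb : ‖b‖ ≤ ρ / 16) (hρ : 0 < ρ) (N : ℝ)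
    (hA : HasSum (fun ℓ => Real.exp ((σ + ρ) * wnorm η ℓ) * ‖A ℓ‖) N) :
    ‖FF η (σ + ρ / 2) hs A b‖ ≤ N := by
  rw [FF, norm_neg]
  exact tsum_of_norm_bounded hA fun ℓ => tm_norm hη σ ρ hs A b hb hρ ℓ

theorem FF_sub_norm (hη : 0 < η) (σ ρ : ℝ) (hs : 0 ≤ σ + ρ / 2)
    (A : Lam → Linf) (b b' : L1 Linf) (hb : ‖b‖ ≤ ρ / 16) (hb' : ‖b'‖ ≤ ρ / 16) (hρ : 0 < ρ) (N : ℝ)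
    (hA : HasSum (fun ℓ => Real.exp ((σ + ρ) * wnorm η ℓ) * ‖A ℓ‖) N) (hN : N ≤ ρ / 16) :
    ‖FF η (σ + ρ / 2) hs A b - FF η (σ + ρ / 2) hs A b'‖ ≤ 1 / 2 * ‖b - b'‖ := by
  rw [FF, FF, neg_sub_neg, norm_sub_rev,
    ← (tm_summable hη σ ρ hs A b hb hρ hA.summable).tsum_sub
      (tm_summable hη σ ρ hs A b' hb' hρ hA.summable)]
  refine (tsum_of_norm_bounded (hA.mul_left (8 / ρ * ‖b - b'‖)) fun ℓ =>
    tm_sub_norm hη σ ρ hs A b b' hb hb' hρ ℓ).trans ?_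
  calc _ ≤ 8 / ρ * ‖b - b'‖ * (ρ / 16) := by gcongr
    _ = _ := by field_simp; ring

theorem JJ_FF (s : ℝ) (hs : 0 ≤ s) (A : Lam → Linf)
    (hR : ∀ ℓ, star (A ℓ) = A (-ℓ)) (b : L1 Linf) (hsum : Summable (tm η s hs A b)) :
    JJ (FF η s hs A b) = FF η s hs A (JJ b) := by
  have h1 : ∀ ℓ, JJ (tm η s hs A b ℓ) = tm η s hs A (JJ b) (-ℓ) := by
    intro ℓ
    rw [tm, tm, JJ_smul, JJ_tens, JJ_exp, hR, wt_neg, ee, JJ_single, star_one, ← ee]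
    simp
  have h2 := hsum.hasSum.map (AddMonoidHom.mk' (JJ : L1 Linf → L1 Linf) JJ_add) JJ_cont
  have h3 : JJ (∑' ℓ, tm η s hs A b ℓ) = ∑' ℓ, tm η s hs A (JJ b) ℓ := by
    rw [← (Equiv.neg Lam).tsum_eq (tm η s hs A (JJ b))]
    refine h2.tsum_eq.symm.trans ?_
    refine tsum_congr fun ℓ => ?_
    exact h1 ℓ
  rw [FF, FF, ← h3]
  exact map_neg (AddMonoidHom.mk' (JJ : L1 Linf → L1 Linf) JJ_add) _

theorem core (hη : 0 < η) (σ ρ : ℝ) (hs : 0 ≤ σ + ρ / 2)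
    (A : Lam → Linf) (hρ : 0 < ρ) (N : ℝ)
    (hA : HasSum (fun ℓ => Real.exp ((σ + ρ) * wnorm η ℓ) * ‖A ℓ‖) N) (hN : N ≤ ρ / 16)
    (hR : ∀ ℓ, star (A ℓ) = A (-ℓ)) :
    ∃ b : L1 Linf, ‖b‖ ≤ N ∧ JJ b = b ∧ FF η (σ + ρ / 2) hs A b = b := by
  let S : Set (L1 Linf) := Metric.closedBall 0 (ρ / 16)
  have hS : ∀ b, b ∈ S ↔ ‖b‖ ≤ ρ / 16 := fun b => mem_closedBall_zero_iff
  have hmaps : Set.MapsTo (FF η (σ + ρ / 2) hs A) S S := fun b hb =>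
    (hS _).2 ((FF_norm hη σ ρ hs A b ((hS _).1 hb) hρ N hA).trans hN)
  have hcontr : ContractingWith (1 / 2) (hmaps.restrict (FF η (σ + ρ / 2) hs A) S S) := by
    refine ⟨by rw [← NNReal.coe_lt_coe]; norm_num, LipschitzWith.of_dist_le_mul fun x y => ?_⟩
    rw [Subtype.dist_eq, Subtype.dist_eq, dist_eq_norm, dist_eq_norm]
    have := FF_sub_norm hη σ ρ hs A x y ((hS _).1 x.2) ((hS _).1 y.2) hρ N hA hN
    simpa using this
  have h0 : (0 : L1 Linf) ∈ S := (hS _).2 (by rw [norm_zero]; positivity)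
  obtain ⟨b, hbS, hfix, -⟩ := hcontr.exists_fixedPoint' (Metric.isClosed_closedBall.isComplete)
    hmaps h0 (edist_ne_top _ _)
  have hbn := (hS _).1 hbS
  have hfix' : FF η (σ + ρ / 2) hs A b = b := hfix
  refine ⟨b, ?_, ?_, hfix'⟩
  · rw [← hfix']
    exact FF_norm hη σ ρ hs A b hbn hρ N hA
  · have hJn : ‖JJ b‖ ≤ ρ / 16 := (JJ_norm_le b).trans hbn
    have h1 := JJ_FF _ hs A hR b (tm_summable hη σ ρ hs A b hbn hρ hA.summable)
    rw [hfix'] at h1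
    have h2 := FF_sub_norm hη σ ρ hs A (JJ b) b hJn hbn hρ N hA hN
    rw [← h1, hfix'] at h2
    have h3 : ‖JJ b - b‖ = 0 := by
      have := norm_nonneg (JJ b - b)
      linarith
    exact sub_eq_zero.mp (norm_eq_zero.mp h3)

theorem eval_FF (s : ℝ) (hs : 0 ≤ s) (A : Lam → Linf) (b : L1 Linf)
    (hsum : Summable (tm η s hs A b)) (θ : ℕ → ℂ) (hθ : θ ∈ Tinf η s) (i : ℕ) :
    chi s θ hθ (comp i (FF η s hs A b)) =
      - realize (fun ℓ j => Linf.ev j (A ℓ)) (fun k => θ k + chi s θ hθ (comp k b)) i := by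
  have h1 := hsum.hasSum.mapL ((chi s θ hθ).comp (comp i))
  rw [FF, map_neg, map_neg, realize]
  congr 1
  refine h1.tsum_eq.symm.trans (tsum_congr fun ℓ => ?_)
  rw [ContinuousLinearMap.comp_apply, tm, map_smul, map_smul, comp_tens, map_smul, chi_exp, chi_ee,
    edot_add_right, mul_add, Complex.exp_add]
  have h2 : (wt η s ℓ : ℂ) ≠ 0 := by exact_mod_cast (wt_pos s ℓ).ne'
  simp only [smul_eq_mul]
  field_simp

/-- Pointwise contraction estimate. -/
theorem realize_lip (hη : 0 < η) (σ ρ : ℝ) (A : Lam → Linf) (hρ : 0 < ρ) (N : ℝ)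
    (hA : HasSum (fun ℓ => Real.exp ((σ + ρ) * wnorm η ℓ) * ‖A ℓ‖) N) (hN : N ≤ ρ / 16)
    (φ ψ : ℕ → ℂ) (hφ : φ ∈ Tinf η σ) (hψ : ψ ∈ Tinf η (σ + ρ / 2)) (d : ℝ) (hd : d ≤ ρ / 8)
    (h : ∀ i, ‖ψ i - φ i‖ ≤ d) (i : ℕ) :
    ‖realize (fun ℓ j => Linf.ev j (A ℓ)) ψ i - realize (fun ℓ j => Linf.ev j (A ℓ)) φ i‖ ≤
      d / 2 := by
  have hd0 : 0 ≤ d := (norm_nonneg _).trans (h 0)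
  have hsm : ∀ θ ∈ Tinf η (σ + ρ / 2), Summable fun ℓ =>
      Linf.ev i (A ℓ) * Complex.exp (Complex.I * edot ℓ θ) := by
    intro θ hθ
    refine Summable.of_norm_bounded hA.summable fun ℓ => ?_
    have hw := wnorm_nonneg (η := η) ℓ
    rw [norm_mul, mul_comm]
    refine mul_le_mul ((char_norm_le _ ℓ θ hθ).trans ?_) (Linf.ev_le _ _) (norm_nonneg _)
      (Real.exp_pos _).le
    exact Real.exp_le_exp.mpr (mul_le_mul_of_nonneg_right (by linarith) hw)
  have hφ' : φ ∈ Tinf η (σ + ρ / 2) := fun j => (hφ j).trans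
    (mul_le_mul_of_nonneg_right (by linarith) (base_pos j).le)
  rw [realize, realize, ← (hsm ψ hψ).tsum_sub (hsm φ hφ')]
  have hfin : 8 / ρ * d * N ≤ d / 2 := by
    calc _ ≤ 8 / ρ * d * (ρ / 16) := by gcongr
      _ = _ := by field_simp; ring
  refine (tsum_of_norm_bounded (hA.mul_left (8 / ρ * d)) fun ℓ => ?_).trans hfin
  have hw := wnorm_nonneg (η := η) ℓ
  have hz : ‖Complex.I * edot ℓ (fun k => ψ k - φ k)‖ ≤ wnorm η ℓ * d := by
    rw [norm_mul, Complex.norm_I, one_mul]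
    exact edot_norm_le hη ℓ _ d h
  have he : Complex.exp (Complex.I * edot ℓ ψ) - Complex.exp (Complex.I * edot ℓ φ) =
      Complex.exp (Complex.I * edot ℓ φ) *
        (Complex.exp (Complex.I * edot ℓ (fun k => ψ k - φ k)) - 1) := by
    rw [mul_sub, ← Complex.exp_add, ← edot_sub_right, mul_one]
    congr 2
    ring
  have h1 : ‖Complex.exp (Complex.I * edot ℓ (fun k => ψ k - φ k)) - 1‖ ≤
      (wnorm η ℓ * d) * Real.exp (wnorm η ℓ * d) := by
    have h2 := exp_sub_bound (Complex.I * edot ℓ (fun k => ψ k - φ k)) 0 (wnorm η ℓ * d) hz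
      (by rw [norm_zero]; positivity)
    rw [NormedSpace.exp_zero, sub_zero, ← Complex.exp_eq_exp_ℂ] at h2
    exact h2.trans (by gcongr)
  have h2 : wnorm η ℓ ≤ 8 / ρ * Real.exp (ρ / 8 * wnorm η ℓ) := by
    have := Real.add_one_le_exp (ρ / 8 * wnorm η ℓ)
    calc wnorm η ℓ = 8 / ρ * (ρ / 8 * wnorm η ℓ) := by field_simp
      _ ≤ _ := by gcongr; linarith
  rw [← mul_sub, norm_mul, he, norm_mul]
  calc _ ≤ ‖A ℓ‖ * (Real.exp (σ * wnorm η ℓ) *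
        ((8 / ρ * Real.exp (ρ / 8 * wnorm η ℓ) * d) * Real.exp (wnorm η ℓ * d))) := by
        gcongr
        · exact Linf.ev_le _ _
        · exact char_norm_le _ ℓ φ hφ
        · exact h1.trans (by gcongr)
    _ = 8 / ρ * d * (Real.exp (σ * wnorm η ℓ + ρ / 8 * wnorm η ℓ + wnorm η ℓ * d) * ‖A ℓ‖) := by
        rw [Real.exp_add, Real.exp_add]; ring
    _ ≤ _ := by
        gcongr
        nlinarith [mul_nonneg hρ.le hw, mul_le_mul_of_nonneg_left hd hw]

theorem realize_norm (σ : ℝ) (A : Lam → Linf) (N : ℝ)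
    (hA : HasSum (fun ℓ => Real.exp (σ * wnorm η ℓ) * ‖A ℓ‖) N)
    (φ : ℕ → ℂ) (hφ : φ ∈ Tinf η σ) (i : ℕ) :
    ‖realize (fun ℓ j => Linf.ev j (A ℓ)) φ i‖ ≤ N := by
  refine tsum_of_norm_bounded hA fun ℓ => ?_
  rw [norm_mul, mul_comm]
  exact mul_le_mul (char_norm_le _ ℓ φ hφ) (Linf.ev_le _ _) (norm_nonneg _) (Real.exp_pos _).le

theorem Tinf_add (hη : 0 < η) (s d : ℝ) (φ ψ : ℕ → ℂ) (hφ : φ ∈ Tinf η s) (h : ∀ i, ‖ψ i‖ ≤ d) :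
    (fun i => φ i + ψ i) ∈ Tinf η (s + d) := by
  intro i
  have hd0 : 0 ≤ d := (norm_nonneg _).trans (h 0)
  have h1 := (Complex.abs_im_le_norm (ψ i)).trans (h i)
  have h2 : d ≤ d * ((i : ℝ) + 1) ^ η := le_mul_of_one_le_right hd0 (one_le_base hη i)
  rw [Complex.add_im, add_mul]
  exact (abs_add_le _ _).trans (add_le_add (hφ i) (h1.trans h2))

theorem Tinf_mono {s t : ℝ} (h : s ≤ t) {φ : ℕ → ℂ} (hφ : φ ∈ Tinf η s) : φ ∈ Tinf η t :=
  fun j => (hφ j).trans (mul_le_mul_of_nonneg_right h (base_pos j).le)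

theorem main_real (hη : 0 < η) (σ ρ : ℝ) (hσ : 0 < σ) (hρ : 0 < ρ) (A : Lam → Linf) (N : ℝ)
    (hA : HasSum (fun ℓ => Real.exp ((σ + ρ) * wnorm η ℓ) * ‖A ℓ‖) N) (hN : N ≤ ρ / 16)
    (hR : ∀ ℓ, star (A ℓ) = A (-ℓ)) (a : Lam → ℕ → ℂ) (ha : a = fun ℓ j => Linf.ev j (A ℓ)) :
    ∃ b : L1 Linf, ‖b‖ ≤ N ∧ JJ b = b ∧
      ∀ c : Lam → ℕ → ℂ, (c = fun ℓ j => Linf.ev j (b ℓ) / (wt η (σ + ρ / 2) ℓ : ℂ)) →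
      (∀ φ ∈ Tinf η σ, (fun i => (φ i + realize a φ i) +
                realize c (fun k => φ k + realize a φ k) i) = φ) ∧
      (∀ θ ∈ Tinf η σ, (fun i => (θ i + realize c θ i) +
                realize a (fun k => θ k + realize c θ k) i) = θ) := by
  have hs : 0 ≤ σ + ρ / 2 := by positivity
  obtain ⟨b, hbN, hJ, hF⟩ := core hη σ ρ hs A hρ N hA hN hR
  refine ⟨b, hbN, hJ, fun c hc => ?_⟩
  have hb : ‖b‖ ≤ ρ / 16 := hbN.trans hN
  have hsum := tm_summable hη σ ρ hs A b hb hρ hA.summable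
  have hchi : ∀ θ (hθ : θ ∈ Tinf η (σ + ρ / 2)) i, realize c θ i = chi _ θ hθ (comp i b) := by
    intro θ hθ i
    rw [chi_apply, realize]
    refine tsum_congr fun ℓ => ?_
    rw [comp_apply, hc]
  have hcn : ∀ θ ∈ Tinf η (σ + ρ / 2), ∀ i, ‖realize c θ i‖ ≤ ρ / 16 := by
    intro θ hθ i
    rw [hchi θ hθ]
    have h1 := (comp i).le_of_opNorm_le (comp_norm i) b
    exact (chi_norm_le _ θ hθ _).trans (by linarith)
  have hinv : ∀ θ ∈ Tinf η (σ + ρ / 2), ∀ i,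
      (θ i + realize c θ i) + realize a (fun k => θ k + realize c θ k) i = θ i := by
    intro θ hθ i
    have h1 := eval_FF _ hs A b hsum θ hθ i
    rw [hF, ← ha] at h1
    have h2 : (fun k => θ k + realize c θ k) = (fun k => θ k + chi _ θ hθ (comp k b)) := by
      funext k; rw [hchi θ hθ]
    rw [h2, hchi θ hθ, h1]
    ring
  refine ⟨fun φ hφ => ?_, fun θ hθ => funext (hinv θ (Tinf_mono (by linarith) hθ))⟩
  have han : ∀ i, ‖realize a φ i‖ ≤ ρ / 16 := fun i => by
    rw [ha]
    exact (realize_norm _ A N hA φ (Tinf_mono (by linarith) hφ) i).trans hN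
  set θ : ℕ → ℂ := fun k => φ k + realize a φ k with hθdef
  have hθ1 : θ ∈ Tinf η (σ + ρ / 16) := Tinf_add hη _ _ φ _ hφ han
  have hθ : θ ∈ Tinf η (σ + ρ / 2) := Tinf_mono (by linarith) hθ1
  set ψ : ℕ → ℂ := fun k => θ k + realize c θ k with hψdef
  have hψ : ψ ∈ Tinf η (σ + ρ / 2) :=
    Tinf_mono (by linarith) (Tinf_add hη _ _ θ _ hθ1 (hcn θ hθ))
  have hdiff : ∀ i, ψ i - φ i = -(realize a ψ i - realize a φ i) := by
    intro i
    have h1 : ψ i + realize a ψ i = θ i := hinv θ hθ i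
    have h2 : θ i = φ i + realize a φ i := rfl
    linear_combination h1 + h2
  have hind : ∀ n : ℕ, ∀ i, ‖ψ i - φ i‖ ≤ ρ / 8 * (1 / 2) ^ n := by
    intro n
    induction n with
    | zero =>
      intro i
      have : ψ i - φ i = realize a φ i + realize c θ i := by
        simp only [hψdef, hθdef]; ring
      rw [this]
      have h1 := norm_add_le (realize a φ i) (realize c θ i)
      have h2 := han i
      have h3 := hcn θ hθ i
      simp only [pow_zero, mul_one]
      linarith
    | succ n ih =>
      intro i
      have h1 := realize_lip hη σ ρ A hρ N hA hN φ ψ hφ hψ _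
        (mul_le_of_le_one_right (by positivity) (pow_le_one₀ (by norm_num) (by norm_num))) ih i
      rw [← ha] at h1
      rw [hdiff i, norm_neg, pow_succ]
      linarith
  funext i
  have hlim : Filter.Tendsto (fun n : ℕ => ρ / 8 * (1 / 2 : ℝ) ^ n) Filter.atTop (nhds 0) := by
    have := (tendsto_pow_atTop_nhds_zero_of_lt_one (r := (1 / 2 : ℝ)) (by norm_num)
      (by norm_num)).const_mul (ρ / 8)
    simpa using this
  have := ge_of_tendsto' hlim (fun n => hind n i)
  exact sub_eq_zero.mp (norm_le_zero_iff.mp this)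

end fixed

section final

variable {η : ℝ}

theorem Linf_iSup (v : Linf) : ⨆ i, (‖Linf.ev i v‖₊ : ℝ≥0∞) = ENNReal.ofReal ‖v‖ := by
  apply le_antisymm
  · refine iSup_le fun i => ?_
    change ‖Linf.ev i v‖ₑ ≤ _
    rw [← ofReal_norm (Linf.ev i v)]
    exact ENNReal.ofReal_le_ofReal (Linf.ev_le i v)
  · by_cases htop : (⨆ i, (‖Linf.ev i v‖₊ : ℝ≥0∞)) = ⊤
    · rw [htop]; exact le_top
    rw [← ENNReal.ofReal_toReal htop]
    refine ENNReal.ofReal_le_ofReal (Linf.norm_le ENNReal.toReal_nonneg fun i => ?_)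
    have h1 : (‖Linf.ev i v‖₊ : ℝ≥0∞) ≤ ⨆ i, (‖Linf.ev i v‖₊ : ℝ≥0∞) :=
      le_iSup (fun i => (‖Linf.ev i v‖₊ : ℝ≥0∞)) i
    have h2 := ENNReal.toReal_mono htop h1
    simpa using h2

theorem supNormCoef_eq (s : ℝ) (A : Lam → Linf) (a : Lam → ℕ → ℂ)
    (ha : a = fun ℓ j => Linf.ev j (A ℓ)) :
    supNormCoef η s a = ∑' ℓ, ENNReal.ofReal (Real.exp (s * wnorm η ℓ) * ‖A ℓ‖) := by
  rw [supNormCoef, ha]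
  refine tsum_congr fun ℓ => ?_
  rw [Linf_iSup, ENNReal.ofReal_mul (Real.exp_pos _).le]

theorem exists_lift (s : ℝ) (a : Lam → ℕ → ℂ) (h : supNormCoef η s a ≠ ⊤) :
    ∃ A : Lam → Linf, a = fun ℓ j => Linf.ev j (A ℓ) := by
  have h1 : ∀ ℓ, (⨆ i, (‖a ℓ i‖₊ : ℝ≥0∞)) ≠ ⊤ := by
    intro ℓ htop
    have h2 := ENNReal.le_tsum (f := fun ℓ : Lam => ENNReal.ofReal (Real.exp (s * wnorm η ℓ)) *
      ⨆ i, (‖a ℓ i‖₊ : ℝ≥0∞)) ℓ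
    rw [htop, ENNReal.mul_top (by simpa using Real.exp_pos _)] at h2
    exact h (top_le_iff.mp h2)
  refine ⟨fun ℓ => Linf.mk (a ℓ) (⨆ i, (‖a ℓ i‖₊ : ℝ≥0∞)).toReal fun i => ?_, rfl⟩
  have h2 := ENNReal.toReal_mono (h1 ℓ) (le_iSup (fun i => (‖a ℓ i‖₊ : ℝ≥0∞)) i)
  simpa using h2

end final

end TorusDiffeo


/-- Torus diffeomorphism: there is δ ∈ (0,1) such that if
α ∈ H(T^∞_{σ+ρ}, ℓ^∞) is real on real and `ρ⁻¹|α|_{σ+ρ} ≤ δ`, then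
`φ ↦ φ + α(φ)` is invertible on `T^∞_σ`, with inverse `θ ↦ θ + α̃(θ)` where
α̃ ∈ H(T^∞_{σ+ρ/2}, ℓ^∞) is real on real and `|α̃|_{σ+ρ/2} ≤ C|α|_{σ+ρ}`. -/
theorem torus_diffeomorphism (η : ℝ) (hη : 0 < η) :
    ∃ δ : ℝ, 0 < δ ∧ δ < 1 ∧ ∃ C > (0 : ℝ),
      ∀ (σ ρ : ℝ), 0 < σ → 0 < ρ →
      ∀ a : (ℕ →₀ ℤ) → ℕ → ℂ, RealOnReal a →
        supNormCoef η (σ + ρ) a ≤ ENNReal.ofReal (δ * ρ) →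
        ∃ b : (ℕ →₀ ℤ) → ℕ → ℂ, RealOnReal b ∧
          supNormCoef η (σ + ρ / 2) b ≤
            ENNReal.ofReal C * supNormCoef η (σ + ρ) a ∧
          (∀ φ ∈ Tinf η σ,
            (fun i => (φ i + realize a φ i) +
                realize b (fun k => φ k + realize a φ k) i) = φ) ∧
          (∀ θ ∈ Tinf η σ,
            (fun i => (θ i + realize b θ i) +
                realize a (fun k => θ k + realize b θ k) i) = θ) := by
  refine ⟨1 / 16, by norm_num, by norm_num, 1, one_pos, fun σ ρ hσ hρ a hR hle => ?_⟩
  have hne : supNormCoef η (σ + ρ) a ≠ ⊤ := ne_top_of_le_ne_top ENNReal.ofReal_ne_top hle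
  obtain ⟨A, ha⟩ := TorusDiffeo.exists_lift _ a hne
  have heq := TorusDiffeo.supNormCoef_eq (η := η) (σ + ρ) A a ha
  have hnn : ∀ ℓ, 0 ≤ Real.exp ((σ + ρ) * wnorm η ℓ) * ‖A ℓ‖ := fun ℓ =>
    mul_nonneg (Real.exp_pos _).le (norm_nonneg _)
  have hsum : Summable fun ℓ => Real.exp ((σ + ρ) * wnorm η ℓ) * ‖A ℓ‖ := by
    have := ENNReal.summable_toReal (heq ▸ hne)
    refine this.congr fun ℓ => ?_
    rw [ENNReal.toReal_ofReal (hnn ℓ)]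
  have hN := hsum.hasSum
  set N := ∑' ℓ, Real.exp ((σ + ρ) * wnorm η ℓ) * ‖A ℓ‖ with hNdef
  have heqN : supNormCoef η (σ + ρ) a = ENNReal.ofReal N := by
    rw [heq, hNdef, ENNReal.ofReal_tsum_of_nonneg hnn hsum]
  have hNle : N ≤ ρ / 16 := by
    rw [heqN, ENNReal.ofReal_le_ofReal_iff (by positivity)] at hle
    linarith
  have hRA : ∀ ℓ, star (A ℓ) = A (-ℓ) := by
    intro ℓ
    refine TorusDiffeo.Linf.ext fun j => ?_
    have := hR ℓ j
    rw [ha] at this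
    exact this
  obtain ⟨b, hbN, hJ, hb⟩ := TorusDiffeo.main_real hη σ ρ hσ hρ A N hN hNle hRA a ha
  obtain ⟨h1, h2⟩ := hb _ rfl
  refine ⟨_, ?_, ?_, h1, h2⟩
  · intro ℓ i
    have h3 : b (-ℓ) = star (b ℓ) := by
      conv_lhs => rw [← hJ]
      rw [TorusDiffeo.JJ_apply, neg_neg]
    simp only [h3, TorusDiffeo.Linf.ev_star, TorusDiffeo.wt_neg, map_div₀, Complex.conj_ofReal]
    rfl
  · rw [TorusDiffeo.supNormCoef_eq (η := η) (σ + ρ / 2)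
      (fun ℓ => ((TorusDiffeo.wt η (σ + ρ / 2) ℓ : ℂ))⁻¹ • b ℓ) _
      (by funext ℓ j; simp only [map_smul, smul_eq_mul]; rw [div_eq_inv_mul]), heqN,
      ENNReal.ofReal_one, one_mul]
    have h4 : ∀ ℓ, Real.exp ((σ + ρ / 2) * wnorm η ℓ) *
        ‖((TorusDiffeo.wt η (σ + ρ / 2) ℓ : ℂ))⁻¹ • b ℓ‖ = ‖b ℓ‖ := by
      intro ℓ
      have h5 := TorusDiffeo.wt_pos (η := η) (σ + ρ / 2) ℓ
      rw [norm_smul, norm_inv, Complex.norm_real, Real.norm_of_nonneg h5.le, ← mul_assoc]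
      change TorusDiffeo.wt η (σ + ρ / 2) ℓ * _ * _ = _
      rw [mul_inv_cancel₀ h5.ne', one_mul]
    simp only [h4]
    have h6 := TorusDiffeo.L1_hasSum_norm b
    rw [← ENNReal.ofReal_tsum_of_nonneg (fun _ => norm_nonneg _) h6.summable, h6.tsum_eq]
    exact ENNReal.ofReal_le_ofReal hbN
end

section
/- Elimination of x-dependence in the leading coefficient: let λ₃ ∈ ℝ with |λ₃ − 1| ≤ δ₀ small and d₃ ∈ H(T^∞_ρ × T_ρ) with |d₃|_ρ ≤ δ ≪ min(δ₀, ρ). Define m₃(φ) := ( (2π)^{-1} ∫_T (λ₃ + d₃(φ,x))^{-1/3} dx )^{-3} and α(φ,x) := ∂_x^{-1}[ m₃(φ)^{1/3} (λ₃ + d₃(φ,x))^{-1/3} − 1 ]. Then (λ₃ + d₃(φ,x))(1 + α_x(φ,x))³ = m₃(φ) identically, and the estimates |m₃ − λ₃|_ρ ≤ Cδ and |α|_ρ ≤ Cδ hold. -/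
open scoped BigOperators Classical

noncomputable def wt (η σ : ℝ) (p : (ℕ →₀ ℤ) × ℤ) : ℝ :=
  Real.exp (σ * (wnorm η p.1 + |(p.2 : ℝ)|))

noncomputable def odot (ω : ℕ → ℝ) (ℓ : ℕ →₀ ℤ) : ℝ :=
  ∑ i ∈ ℓ.support, ω i * (ℓ i : ℝ)

/-- realization of `d₃(φ,x)` from its Fourier coefficients, at real points. -/
noncomputable def realizeFn (dc : (ℕ →₀ ℤ) × ℤ → ℂ) (φ : ℕ → ℝ) (x : ℝ) : ℂ :=
  ∑' p : (ℕ →₀ ℤ) × ℤ,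
    dc p * Complex.exp (Complex.I * ((odot φ p.1 + (p.2 : ℝ) * x : ℝ) : ℂ))

/-- `m₃(φ) = ( (2π)⁻¹ ∫_T (λ₃+d₃(φ,x))^{-1/3} dx )^{-3}`. -/
noncomputable def m3fn (lam3 : ℝ) (dc : (ℕ →₀ ℤ) × ℤ → ℂ) (φ : ℕ → ℝ) : ℂ :=
  (((2 * Real.pi : ℝ) : ℂ)⁻¹ *
      ∫ x in (0 : ℝ)..(2 * Real.pi),
        ((lam3 : ℂ) + realizeFn dc φ x) ^ (-(1 / 3 : ℂ))) ^ (-(3 : ℂ))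


namespace ElimX

abbrev G := (ℕ →₀ ℤ) × ℤ

noncomputable def E (p : G) (φ : ℕ → ℝ) (x : ℝ) : ℂ :=
  Complex.exp (Complex.I * ((odot φ p.1 + (p.2 : ℝ) * x : ℝ) : ℂ))

lemma odot_add (φ : ℕ → ℝ) (a b : ℕ →₀ ℤ) : odot φ (a + b) = odot φ a + odot φ b := by
  have h : ∀ ℓ : ℕ →₀ ℤ, odot φ ℓ = ℓ.sum (fun i n => φ i * (n : ℝ)) := fun ℓ => rfl
  simp only [h]
  exact Finsupp.sum_add_index' (by simp) (by intros; push_cast; ring)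

lemma odot_zero (φ : ℕ → ℝ) : odot φ 0 = 0 := by simp [odot]

lemma wnorm_zero (η : ℝ) : wnorm η 0 = 0 := by simp [wnorm]

lemma wnorm_nonneg (η : ℝ) (ℓ : ℕ →₀ ℤ) : 0 ≤ wnorm η ℓ := by
  unfold wnorm
  exact Finset.sum_nonneg fun i _ => by positivity

lemma wnorm_of_subset (η : ℝ) (ℓ : ℕ →₀ ℤ) (s : Finset ℕ) (h : ℓ.support ⊆ s) :
    wnorm η ℓ = ∑ i ∈ s, ((i : ℝ) + 1) ^ η * |(ℓ i : ℝ)| := by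
  unfold wnorm
  refine Finset.sum_subset h fun i _ hi => ?_
  rw [Finsupp.notMem_support_iff.1 hi]; simp

lemma wnorm_add (η : ℝ) (a b : ℕ →₀ ℤ) : wnorm η (a + b) ≤ wnorm η a + wnorm η b := by
  rw [wnorm_of_subset η (a + b) (a.support ∪ b.support) Finsupp.support_add,
    wnorm_of_subset η a (a.support ∪ b.support) Finset.subset_union_left,
    wnorm_of_subset η b (a.support ∪ b.support) Finset.subset_union_right,
    ← Finset.sum_add_distrib]
  refine Finset.sum_le_sum fun i _ => ?_
  rw [← mul_add]
  refine mul_le_mul_of_nonneg_left ?_ (by positivity)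
  rw [Finsupp.add_apply]; push_cast
  exact abs_add_le _ _

lemma wt_pos (η ρ : ℝ) (p : G) : 0 < wt η ρ p := Real.exp_pos _

lemma one_le_wt (η : ℝ) {ρ : ℝ} (hρ : 0 ≤ ρ) (p : G) : 1 ≤ wt η ρ p := by
  have := wnorm_nonneg η p.1
  exact Real.one_le_exp (by positivity)

lemma wt_add (η : ℝ) {ρ : ℝ} (hρ : 0 ≤ ρ) (p q : G) : wt η ρ (p + q) ≤ wt η ρ p * wt η ρ q := by
  unfold wt
  rw [← Real.exp_add, ← mul_add]
  refine Real.exp_le_exp.2 (mul_le_mul_of_nonneg_left ?_ hρ)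
  have h1 := wnorm_add η p.1 q.1
  have h2 := abs_add_le (p.2 : ℝ) (q.2 : ℝ)
  simp only [Prod.fst_add, Prod.snd_add, Int.cast_add]
  linarith

lemma wt_zero (η ρ : ℝ) : wt η ρ 0 = 1 := by simp [wt, wnorm_zero]

lemma E_zero (φ : ℕ → ℝ) (x : ℝ) : E 0 φ x = 1 := by simp [E, odot_zero]

lemma E_add (p q : G) (φ : ℕ → ℝ) (x : ℝ) : E (p + q) φ x = E p φ x * E q φ x := by
  unfold E
  rw [← Complex.exp_add]
  congr 1
  simp only [Prod.fst_add, Prod.snd_add, odot_add]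
  push_cast; ring

lemma norm_E (p : G) (φ : ℕ → ℝ) (x : ℝ) : ‖E p φ x‖ = 1 := by
  unfold E
  rw [mul_comm]; exact Complex.norm_exp_ofReal_mul_I _

/-- `F` is represented by an absolutely convergent Fourier series of weighted norm at most `M`. -/
def Rep (η ρ : ℝ) (F : (ℕ → ℝ) → ℝ → ℂ) (M : ℝ) : Prop :=
  ∃ c : G → ℂ, Summable (fun p => wt η ρ p * ‖c p‖) ∧ (∑' p, wt η ρ p * ‖c p‖) ≤ M ∧
    ∀ φ x, HasSum (fun p => c p * E p φ x) (F φ x)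

lemma summable_norm_of_wt {η ρ : ℝ} (hρ : 0 ≤ ρ) {ι : Type} {c : ι → ℂ} {g : ι → G}
    (h : Summable (fun i => wt η ρ (g i) * ‖c i‖)) : Summable (fun i => ‖c i‖) :=
  h.of_nonneg_of_le (fun _ => norm_nonneg _)
    fun i => le_mul_of_one_le_left (norm_nonneg _) (one_le_wt η hρ _)

lemma Rep.push {η ρ : ℝ} (hρ : 0 ≤ ρ) {F : (ℕ → ℝ) → ℝ → ℂ} {M : ℝ} {ι : Type} (c : ι → ℂ)
    (g : ι → G) (hs : Summable (fun i => wt η ρ (g i) * ‖c i‖))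
    (hM : (∑' i, wt η ρ (g i) * ‖c i‖) ≤ M)
    (hF : ∀ φ x, HasSum (fun i => c i * E (g i) φ x) (F φ x)) : Rep η ρ F M := by
  have hfib := hs.hasSum.tsum_fiberwise g
  have hn := summable_norm_of_wt hρ hs
  have hle : ∀ p, wt η ρ p * ‖∑' b : (g ⁻¹' {p}), c b‖ ≤
      ∑' b : (g ⁻¹' {p}), wt η ρ (g b) * ‖c b‖ := by
    intro p
    have h1 : ∀ b : (g ⁻¹' {p}), wt η ρ (g b) * ‖c b‖ = wt η ρ p * ‖c b‖ := by
      rintro ⟨b, hb⟩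
      have : g b = p := hb
      simp [this]
    rw [tsum_congr h1, tsum_mul_left]
    exact mul_le_mul_of_nonneg_left (norm_tsum_le_tsum_norm (hn.subtype _)) (wt_pos _ _ _).le
  have hsum : Summable fun p => wt η ρ p * ‖∑' b : (g ⁻¹' {p}), c b‖ :=
    hfib.summable.of_nonneg_of_le (fun p => mul_nonneg (wt_pos _ _ _).le (norm_nonneg _)) hle
  refine ⟨fun p => ∑' b : (g ⁻¹' {p}), c b, hsum, ?_, ?_⟩
  · exact ((hsum.tsum_le_tsum hle hfib.summable).trans hfib.tsum_eq.le).trans hM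
  · intro φ x
    have h := (hF φ x).tsum_fiberwise g
    refine h.congr_fun fun p => ?_
    rw [← tsum_mul_right]
    refine tsum_congr ?_
    rintro ⟨b, hb⟩
    have : g b = p := hb
    simp [this]

lemma Rep.congr {η ρ : ℝ} {F F' : (ℕ → ℝ) → ℝ → ℂ} {M M' : ℝ} (h : Rep η ρ F M)
    (hF : ∀ φ x, F φ x = F' φ x) (hM : M ≤ M') : Rep η ρ F' M' := by
  obtain ⟨c, h1, h2, h3⟩ := h
  exact ⟨c, h1, h2.trans hM, fun φ x => hF φ x ▸ h3 φ x⟩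

lemma Rep.nonneg {η ρ : ℝ} {F : (ℕ → ℝ) → ℝ → ℂ} {M : ℝ} (h : Rep η ρ F M) : 0 ≤ M := by
  obtain ⟨c, h1, h2, h3⟩ := h
  exact (tsum_nonneg fun p => mul_nonneg (wt_pos _ _ _).le (norm_nonneg _)).trans h2

lemma Rep.norm_le {η ρ : ℝ} (hρ : 0 ≤ ρ) {F : (ℕ → ℝ) → ℝ → ℂ} {M : ℝ} (h : Rep η ρ F M)
    (φ : ℕ → ℝ) (x : ℝ) : ‖F φ x‖ ≤ M := by
  obtain ⟨c, h1, h2, h3⟩ := h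
  rw [← (h3 φ x).tsum_eq]
  refine (tsum_of_norm_bounded h1.hasSum fun p => ?_).trans h2
  rw [norm_mul, norm_E, mul_one]
  exact le_mul_of_one_le_left (norm_nonneg _) (one_le_wt η hρ _)

lemma Rep.one (η ρ : ℝ) : Rep η ρ (fun _ _ => 1) 1 := by
  refine ⟨fun p => if p = 0 then 1 else 0, ?_, ?_, ?_⟩
  · refine summable_of_ne_finset_zero (s := {0}) fun b hb => ?_
    have : b ≠ 0 := by simpa using hb
    simp [this]
  · rw [tsum_eq_single 0 (fun b hb => by simp [hb])]
    simp [wt_zero]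
  · intro φ x
    convert hasSum_single (0 : G) (fun b hb => ?_) using 1
    · simp [E_zero]
    · simp [hb]

lemma Rep.add {η ρ : ℝ} {F F' : (ℕ → ℝ) → ℝ → ℂ} {M M' : ℝ}
    (h : Rep η ρ F M) (h' : Rep η ρ F' M') :
    Rep η ρ (fun φ x => F φ x + F' φ x) (M + M') := by
  obtain ⟨c, h1, h2, h3⟩ := h
  obtain ⟨c', h1', h2', h3'⟩ := h'
  have hle : ∀ p, wt η ρ p * ‖c p + c' p‖ ≤ wt η ρ p * ‖c p‖ + wt η ρ p * ‖c' p‖ := fun p => by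
    rw [← mul_add]
    exact mul_le_mul_of_nonneg_left (norm_add_le _ _) (wt_pos _ _ _).le
  have hs : Summable fun p => wt η ρ p * ‖c p + c' p‖ :=
    (h1.add h1').of_nonneg_of_le (fun p => mul_nonneg (wt_pos _ _ _).le (norm_nonneg _)) hle
  refine ⟨fun p => c p + c' p, hs, ?_, fun φ x => ?_⟩
  · refine (hs.tsum_le_tsum hle (h1.add h1')).trans ?_
    rw [h1.tsum_add h1']
    linarith
  · simpa only [add_mul] using (h3 φ x).add (h3' φ x)

lemma Rep.smul {η ρ : ℝ} {F : (ℕ → ℝ) → ℝ → ℂ} {M : ℝ} (a : ℂ)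
    (h : Rep η ρ F M) : Rep η ρ (fun φ x => a * F φ x) (‖a‖ * M) := by
  obtain ⟨c, h1, h2, h3⟩ := h
  have he : ∀ p, wt η ρ p * ‖a * c p‖ = ‖a‖ * (wt η ρ p * ‖c p‖) := fun p => by
    rw [norm_mul]; ring
  refine ⟨fun p => a * c p, ?_, ?_, fun φ x => ?_⟩
  · simpa only [he] using h1.mul_left _
  · simp only [he]
    rw [tsum_mul_left]
    exact mul_le_mul_of_nonneg_left h2 (norm_nonneg _)
  · simpa only [mul_assoc] using (h3 φ x).mul_left a

lemma Rep.mul {η ρ : ℝ} (hρ : 0 ≤ ρ) {F F' : (ℕ → ℝ) → ℝ → ℂ} {M M' : ℝ}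
    (h : Rep η ρ F M) (h' : Rep η ρ F' M') :
    Rep η ρ (fun φ x => F φ x * F' φ x) (M * M') := by
  have hM := h.nonneg
  obtain ⟨c, h1, h2, h3⟩ := h
  obtain ⟨c', h1', h2', h3'⟩ := h'
  have hprod := h1.mul_of_nonneg h1' (fun p => mul_nonneg (wt_pos _ _ _).le (norm_nonneg _))
    (fun p => mul_nonneg (wt_pos _ _ _).le (norm_nonneg _))
  have hle : ∀ q : G × G, wt η ρ (q.1 + q.2) * ‖c q.1 * c' q.2‖ ≤
      (wt η ρ q.1 * ‖c q.1‖) * (wt η ρ q.2 * ‖c' q.2‖) := fun q => by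
    rw [norm_mul]
    calc _ ≤ (wt η ρ q.1 * wt η ρ q.2) * (‖c q.1‖ * ‖c' q.2‖) :=
          mul_le_mul_of_nonneg_right (wt_add η hρ _ _) (by positivity)
      _ = _ := by ring
  have hs : Summable fun q : G × G => wt η ρ (q.1 + q.2) * ‖c q.1 * c' q.2‖ :=
    hprod.of_nonneg_of_le (fun p => mul_nonneg (wt_pos _ _ _).le (norm_nonneg _)) hle
  refine Rep.push hρ (ι := G × G) (fun q => c q.1 * c' q.2) (fun q => q.1 + q.2) hs ?_ ?_
  · refine (hs.tsum_le_tsum hle hprod).trans ?_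
    rw [← h1.tsum_mul_tsum h1' hprod]
    exact mul_le_mul h2 h2'
      (tsum_nonneg fun p => mul_nonneg (wt_pos _ _ _).le (norm_nonneg _)) hM
  · intro φ x
    have he : ∀ q : G × G, c q.1 * c' q.2 * E (q.1 + q.2) φ x =
        (c q.1 * E q.1 φ x) * (c' q.2 * E q.2 φ x) := fun q => by rw [E_add]; ring
    simp only [he]
    refine HasSum.mul (f := fun p : G => c p * E p φ x) (g := fun p : G => c' p * E p φ x)
      (h3 φ x) (h3' φ x) ?_
    refine Summable.of_norm ?_
    have h5 := summable_norm_of_wt hρ hs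
    refine h5.congr fun q => ?_
    simp [norm_E]

lemma Rep.pow {η ρ : ℝ} (hρ : 0 ≤ ρ) {F : (ℕ → ℝ) → ℝ → ℂ} {M : ℝ}
    (h : Rep η ρ F M) (n : ℕ) : Rep η ρ (fun φ x => F φ x ^ n) (M ^ n) := by
  induction n with
  | zero => simpa using Rep.one η ρ
  | succ n ih => simpa only [pow_succ] using ih.mul hρ h

lemma Rep.series {η ρ : ℝ} (hρ : 0 ≤ ρ) {F : ℕ → (ℕ → ℝ) → ℝ → ℂ} {M : ℕ → ℝ}
    {S : (ℕ → ℝ) → ℝ → ℂ} (h : ∀ n, Rep η ρ (F n) (M n)) (hM : Summable M)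
    (hS : ∀ φ x, HasSum (fun n => F n φ x) (S φ x)) : Rep η ρ S (∑' n, M n) := by
  choose c h1 h2 h3 using h
  have h0 : ∀ n, 0 ≤ ∑' p, wt η ρ p * ‖c n p‖ := fun n =>
    tsum_nonneg fun p => mul_nonneg (wt_pos _ _ _).le (norm_nonneg _)
  have hs1 : Summable fun n => ∑' p, wt η ρ p * ‖c n p‖ := hM.of_nonneg_of_le h0 h2
  have hs : Summable fun q : ℕ × G => wt η ρ q.2 * ‖c q.1 q.2‖ :=
    (summable_prod_of_nonneg (fun q => mul_nonneg (wt_pos _ _ _).le (norm_nonneg _))).2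
      ⟨h1, hs1⟩
  refine Rep.push hρ (ι := ℕ × G) (fun q => c q.1 q.2) (fun q => q.2) hs ?_ ?_
  · rw [hs.tsum_prod]
    exact hs1.tsum_le_tsum h2 hM
  · intro φ x
    have hsum : Summable fun q : ℕ × G => c q.1 q.2 * E q.2 φ x := by
      refine Summable.of_norm ((summable_norm_of_wt hρ hs).congr fun q => ?_)
      simp [norm_E]
    have h4 := hsum.hasSum.prod_fiberwise (fun n => h3 n φ x)
    rw [(hS φ x).unique h4]
    exact hsum.hasSum

/-- Moser composition lemma. -/
lemma moser {f : ℂ → ℂ} (hf : AnalyticAt ℂ f 0) (hf0 : f 0 = 0) :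
    ∃ r > (0 : ℝ), ∃ K > (0 : ℝ), ∀ (η ρ : ℝ) (F : (ℕ → ℝ) → ℝ → ℂ) (M : ℝ), 0 ≤ ρ →
      M ≤ r → Rep η ρ F M → Rep η ρ (fun φ x => f (F φ x)) (K * M) := by
  obtain ⟨p, R, hp⟩ := hf
  obtain ⟨s, hs0, hsR⟩ := ENNReal.lt_iff_exists_nnreal_btwn.1 hp.r_pos
  have hs0' : 0 < (s : ℝ) := by exact_mod_cast hs0
  have hsum := p.summable_norm_mul_pow (hsR.trans_le hp.r_le)
  have hT : 0 ≤ ∑' n, ‖p n‖ * (s : ℝ) ^ n := tsum_nonneg fun n => by positivity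
  refine ⟨s, hs0', (∑' n, ‖p n‖ * (s : ℝ) ^ n) / s + 1, by positivity, ?_⟩
  intro η ρ F M hρ hM hF
  have hM0 := hF.nonneg
  have hc0 : p.coeff 0 = 0 := by
    have := hp.coeff_zero (fun _ => 0)
    rw [hf0] at this
    rw [← this]; unfold FormalMultilinearSeries.coeff; congr 1; exact Subsingleton.elim _ _
  have hle : ∀ n, ‖p.coeff n‖ * M ^ n ≤ (‖p n‖ * (s : ℝ) ^ n) * (M / s) := by
    intro n
    rw [FormalMultilinearSeries.norm_apply_eq_norm_coef]
    rcases n with _ | n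
    · simp [hc0]
    · have : M ^ n ≤ (s : ℝ) ^ n := pow_le_pow_left₀ hM0 hM n
      calc ‖p.coeff (n+1)‖ * M ^ (n+1) = ‖p.coeff (n+1)‖ * (M ^ n * M) := by rw [pow_succ]
        _ ≤ ‖p.coeff (n+1)‖ * ((s : ℝ) ^ n * M) := by gcongr
        _ = _ := by rw [pow_succ (s : ℝ)]; field_simp
  have hsumM : Summable fun n => ‖p.coeff n‖ * M ^ n :=
    (hsum.mul_right (M / s)).of_nonneg_of_le (fun n => by positivity) hle
  have := Rep.series hρ (F := fun n φ x => p.coeff n * F φ x ^ n)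
    (S := fun φ x => f (F φ x)) (fun n => (hF.pow hρ n).smul (p.coeff n)) hsumM ?_
  · refine this.congr (fun _ _ => rfl) ?_
    refine (hsumM.tsum_le_tsum hle (hsum.mul_right (M / s))).trans ?_
    rw [tsum_mul_right]
    have : (∑' n, ‖p n‖ * (s : ℝ) ^ n) * (M / s) = (∑' n, ‖p n‖ * (s : ℝ) ^ n) / s * M := by ring
    rw [this]
    nlinarith
  · intro φ x
    have hb : F φ x ∈ Metric.eball (0 : ℂ) R := by
      rw [Metric.mem_eball, edist_zero_right]
      refine lt_of_le_of_lt ?_ hsR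
      rw [enorm_le_coe]
      exact_mod_cast (hF.norm_le hρ φ x).trans hM
    have h := hp.hasSum hb
    simp only [FormalMultilinearSeries.apply_eq_pow_smul_coeff, zero_add, smul_eq_mul] at h
    simpa only [mul_comm] using h

noncomputable def avg (F : (ℕ → ℝ) → ℝ → ℂ) (φ : ℕ → ℝ) : ℂ :=
  ((2 * Real.pi : ℝ) : ℂ)⁻¹ * ∫ x in (0 : ℝ)..(2 * Real.pi), F φ x

lemma avg_E (p : G) (φ : ℕ → ℝ) : avg (E p) φ = if p.2 = 0 then E p φ 0 else 0 := by
  have hpi : ((2 * Real.pi : ℝ) : ℂ) ≠ 0 := by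
    exact_mod_cast Real.two_pi_pos.ne'
  unfold avg
  split_ifs with h
  · have : (fun x => E p φ x) = fun _ => E p φ 0 := by funext x; simp [E, h]
    rw [this]
    rw [intervalIntegral.integral_const]
    simp only [sub_zero, Complex.real_smul]
    field_simp
  · have : (fun x : ℝ => E p φ x) =
        fun x : ℝ => E p φ 0 * Complex.exp ((Complex.I * p.2) * x) := by
      funext x
      unfold E
      rw [← Complex.exp_add]; congr 1; push_cast; ring
    rw [this]
    rw [intervalIntegral.integral_const_mul, integral_exp_mul_complex
      (mul_ne_zero Complex.I_ne_zero (by exact_mod_cast h))]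
    have h2 : Complex.exp (Complex.I * p.2 * ((2 * Real.pi : ℝ) : ℂ)) = 1 := by
      rw [Complex.exp_eq_one_iff]
      exact ⟨p.2, by push_cast; ring⟩
    rw [h2]; simp

lemma hasSum_avg {η ρ : ℝ} (hρ : 0 ≤ ρ) {F : (ℕ → ℝ) → ℝ → ℂ} {c : G → ℂ}
    (h1 : Summable (fun p => wt η ρ p * ‖c p‖))
    (h3 : ∀ φ x, HasSum (fun p => c p * E p φ x) (F φ x)) (φ : ℕ → ℝ) :
    HasSum (fun p : G => if p.2 = 0 then c p * E p φ 0 else 0) (avg F φ) := by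
  have hn := summable_norm_of_wt (g := id) hρ h1
  have hcont : ∀ p, Continuous fun x => c p * E p φ x := fun p => by
    unfold E; fun_prop
  have h := intervalIntegral.hasSum_integral_of_dominated_convergence
    (μ := MeasureTheory.volume) (a := 0) (b := 2 * Real.pi)
    (F := fun p x => c p * E p φ x) (f := fun x => F φ x) (fun p _ => ‖c p‖)
    (fun p => (hcont p).aestronglyMeasurable)
    (fun p => Filter.Eventually.of_forall fun x _ => by rw [norm_mul, norm_E, mul_one])
    (Filter.Eventually.of_forall fun x _ => hn) (by simp)
    (Filter.Eventually.of_forall fun x _ => h3 φ x)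
  have h' := h.mul_left (((2 * Real.pi : ℝ) : ℂ)⁻¹)
  refine h'.congr_fun fun p => ?_
  rw [intervalIntegral.integral_const_mul, mul_left_comm]
  have := avg_E p φ
  unfold avg at this
  rw [this]
  split_ifs <;> simp

lemma Rep.avg {η ρ : ℝ} (hρ : 0 ≤ ρ) {F : (ℕ → ℝ) → ℝ → ℂ} {M : ℝ} (h : Rep η ρ F M) :
    Rep η ρ (fun φ _ => avg F φ) M := by
  obtain ⟨c, h1, h2, h3⟩ := h
  have hle : ∀ p : G, wt η ρ p * ‖if p.2 = 0 then c p else 0‖ ≤ wt η ρ p * ‖c p‖ := fun p => by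
    refine mul_le_mul_of_nonneg_left ?_ (wt_pos _ _ _).le
    split_ifs <;> simp
  have hs := h1.of_nonneg_of_le (fun p => mul_nonneg (wt_pos _ _ _).le (norm_nonneg _)) hle
  refine ⟨fun p => if p.2 = 0 then c p else 0, hs, (hs.tsum_le_tsum hle h1).trans h2,
    fun φ x => ?_⟩
  refine (hasSum_avg hρ h1 h3 φ).congr_fun fun p => ?_
  by_cases h : p.2 = 0
  · simp [E, h]
  · simp [h]

lemma Rep.coeffs {η ρ : ℝ} (hρ : 0 ≤ ρ) {F : (ℕ → ℝ) → ℂ} {M : ℝ}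
    (h : Rep η ρ (fun φ _ => F φ) M) :
    ∃ c : (ℕ →₀ ℤ) → ℂ, Summable (fun ℓ => Real.exp (ρ * wnorm η ℓ) * ‖c ℓ‖) ∧
      (∑' ℓ, Real.exp (ρ * wnorm η ℓ) * ‖c ℓ‖) ≤ M ∧
      ∀ φ, HasSum (fun ℓ => c ℓ * Complex.exp (Complex.I * ((odot φ ℓ : ℝ) : ℂ))) (F φ) := by
  obtain ⟨c, h1, h2, h3⟩ := h
  have hinj : Function.Injective (fun ℓ : ℕ →₀ ℤ => ((ℓ, 0) : G)) := fun a b hab => by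
    simpa using hab
  have he : (fun ℓ => Real.exp (ρ * wnorm η ℓ) * ‖c (ℓ, 0)‖) =
      (fun p => wt η ρ p * ‖c p‖) ∘ (fun ℓ : ℕ →₀ ℤ => ((ℓ, 0) : G)) := by
    funext ℓ; simp [wt]
  refine ⟨fun ℓ => c (ℓ, 0), ?_, ?_, fun φ => ?_⟩
  · rw [he]; exact h1.comp_injective hinj
  · rw [he]
    exact (tsum_comp_le_tsum_of_inj h1
      (fun p => mul_nonneg (wt_pos _ _ _).le (norm_nonneg _)) hinj).trans h2
  · have h4 := hasSum_avg hρ h1 h3 φ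
    have h5 : ElimX.avg (fun φ (_ : ℝ) => F φ) φ = F φ := by
      have hpi : ((2 * Real.pi : ℝ) : ℂ) ≠ 0 := by
        exact_mod_cast Real.two_pi_pos.ne'
      unfold ElimX.avg
      rw [intervalIntegral.integral_const]
      simp only [sub_zero, Complex.real_smul]
      field_simp
    rw [h5, ← hinj.hasSum_iff] at h4
    · refine h4.congr_fun fun ℓ => ?_
      simp [E]
    · rintro ⟨ℓ, k⟩ hk
      have : k ≠ 0 := fun h => hk ⟨ℓ, by simp [h]⟩
      simp [this]

lemma Rep.antideriv {η ρ : ℝ} (hρ : 0 ≤ ρ) {F : (ℕ → ℝ) → ℝ → ℂ} {M : ℝ} (h : Rep η ρ F M)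
    (h0 : ∀ φ, ElimX.avg F φ = 0) :
    ∃ a : G → ℂ, (∀ ℓ, a (ℓ, 0) = 0) ∧ Summable (fun p => wt η ρ p * ‖a p‖) ∧
      (∑' p, wt η ρ p * ‖a p‖) ≤ M ∧
      ∀ φ x, (∑' p : G, Complex.I * (p.2 : ℂ) * a p * E p φ x) = F φ x := by
  obtain ⟨c, h1, h2, h3⟩ := h
  have hle : ∀ p : G, wt η ρ p * ‖c p / (Complex.I * (p.2 : ℂ))‖ ≤ wt η ρ p * ‖c p‖ := fun p => by
    refine mul_le_mul_of_nonneg_left ?_ (wt_pos _ _ _).le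
    by_cases hp : p.2 = 0
    · simp [hp]
    · rw [norm_div, norm_mul, Complex.norm_I, one_mul]
      refine div_le_self (norm_nonneg _) ?_
      rw [Complex.norm_intCast]
      exact_mod_cast Int.one_le_abs hp
  have hs := h1.of_nonneg_of_le (fun p => mul_nonneg (wt_pos _ _ _).le (norm_nonneg _)) hle
  refine ⟨fun p => c p / (Complex.I * (p.2 : ℂ)), by simp, hs,
    (hs.tsum_le_tsum hle h1).trans h2, fun φ x => ?_⟩
  have h4 := (h3 φ x).sub (hasSum_avg hρ h1 h3 φ)
  rw [h0, sub_zero] at h4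
  rw [← h4.tsum_eq]
  refine tsum_congr fun p => ?_
  by_cases hp : p.2 = 0
  · simp [hp, E]
  · have : (p.2 : ℂ) ≠ 0 := by exact_mod_cast hp
    have := Complex.I_ne_zero
    simp only [hp, if_false, sub_zero]
    field_simp

lemma Rep.continuous {η ρ : ℝ} (hρ : 0 ≤ ρ) {F : (ℕ → ℝ) → ℝ → ℂ} {M : ℝ} (h : Rep η ρ F M)
    (φ : ℕ → ℝ) : Continuous (F φ) := by
  obtain ⟨c, h1, h2, h3⟩ := h
  have he : F φ = fun x => ∑' p, c p * E p φ x := funext fun x => (h3 φ x).tsum_eq.symm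
  rw [he]
  refine continuous_tsum (fun p => by unfold E; fun_prop)
    (summable_norm_of_wt (g := id) hρ h1) fun p x => ?_
  rw [norm_mul, norm_E, mul_one]

lemma avg_affine {v : (ℕ → ℝ) → ℝ → ℂ} (φ : ℕ → ℝ) (hv : Continuous (v φ)) (a b : (ℕ → ℝ) → ℂ) :
    avg (fun φ x => a φ * (1 + v φ x) + b φ) φ = a φ * (1 + avg v φ) + b φ := by
  have hpi : ((2 * Real.pi : ℝ) : ℂ) ≠ 0 := by
    exact_mod_cast Real.two_pi_pos.ne'
  unfold avg
  rw [intervalIntegral.integral_add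
      (Continuous.intervalIntegrable (by fun_prop) _ _) (by simp),
    intervalIntegral.integral_const_mul,
    intervalIntegral.integral_add (by simp) (hv.intervalIntegrable _ _),
    intervalIntegral.integral_const, intervalIntegral.integral_const]
  simp only [sub_zero, Complex.real_smul]
  field_simp

lemma exists_arg : ∃ r > (0 : ℝ), r < 1 ∧ ∀ z : ℂ, ‖z‖ ≤ r →
    -(Real.pi / 3) < (1 + z)⁻¹.arg ∧ (1 + z)⁻¹.arg ≤ Real.pi / 3 := by
  have hc : ContinuousAt (fun z : ℂ => (1 + z)⁻¹.arg) 0 := by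
    have h1 : ContinuousAt (fun z : ℂ => (1 + z)⁻¹) 0 :=
      ContinuousAt.inv₀ (by fun_prop) (by simp)
    refine ContinuousAt.comp (g := Complex.arg) (f := fun z : ℂ => (1 + z)⁻¹) ?_ h1
    exact Complex.continuousAt_arg (by simp)
  have hpi := Real.pi_pos
  have hmem : Set.Ioo (-(Real.pi / 3)) (Real.pi / 3) ∈ nhds ((1 + (0 : ℂ))⁻¹.arg) := by
    simp only [add_zero, inv_one, Complex.arg_one]
    exact Ioo_mem_nhds (by linarith) (by linarith)
  obtain ⟨r, hr, hb⟩ := Metric.mem_nhds_iff.1 (hc.preimage_mem_nhds hmem)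
  refine ⟨min (r / 2) (1 / 2), by positivity, (min_le_right _ _).trans_lt (by norm_num),
    fun z hz => ?_⟩
  have hz' : z ∈ Metric.ball (0 : ℂ) r := by
    rw [mem_ball_zero_iff]
    have := min_le_left (r / 2) (1 / 2)
    linarith
  have := hb hz'
  exact ⟨this.1, this.2.le⟩

lemma an0 : AnalyticAt ℂ (fun z : ℂ => (1 + z) ^ (-(1 / 3 : ℂ)) - 1) 0 := by
  refine AnalyticAt.sub (AnalyticAt.cpow (by fun_prop) (by fun_prop) ?_) (by fun_prop)
  simp

lemma an1 : AnalyticAt ℂ (fun z : ℂ => (1 + z)⁻¹ - 1) 0 := by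
  refine AnalyticAt.sub (AnalyticAt.inv (by fun_prop) ?_) (by fun_prop)
  simp

lemma an2 : AnalyticAt ℂ (fun z : ℂ => ((1 + z) ^ 3)⁻¹ - 1) 0 := by
  refine AnalyticAt.sub (AnalyticAt.inv (by fun_prop) ?_) (by fun_prop)
  simp

lemma cpow_scale {t : ℝ} (ht : 0 < t) {z : ℂ} (hz : 1 + z ≠ 0) (a : ℂ) :
    ((t : ℂ) * (1 + z)) ^ a = (t : ℂ) ^ a * (1 + z) ^ a := by
  have ht' : (t : ℂ) ≠ 0 := by exact_mod_cast ht.ne'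
  rw [Complex.cpow_def_of_ne_zero (mul_ne_zero ht' hz), Complex.cpow_def_of_ne_zero ht',
    Complex.cpow_def_of_ne_zero hz, ← Complex.exp_add, Complex.log_ofReal_mul ht hz,
    Complex.ofReal_log ht.le]
  congr 1; ring

lemma one_add_ne {z : ℂ} (hz : ‖z‖ < 1) : 1 + z ≠ 0 := by
  intro h
  have : z = -1 := by linear_combination h
  rw [this] at hz; simp at hz

end ElimX

/-- elimination of the x-dependence of the leading coefficient:
if `|λ₃−1| ≤ δ₀` is small and `|d₃|_ρ ≤ δ ≪ min(δ₀,ρ)`, then with `m₃` as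
above there is a zero x-average function `α` (given by Fourier coefficients
`ac`) with `α_x = m₃^{1/3}(λ₃+d₃)^{-1/3} − 1`, so that
`(λ₃+d₃)(1+α_x)³ = m₃` identically, and `|m₃−λ₃|_ρ ≤ Cδ`, `|α|_ρ ≤ Cδ`. -/
theorem elimination_x_dependence (η : ℝ) (hη : 0 < η) :
    ∃ C > (0 : ℝ), ∃ ε > (0 : ℝ),
      ∀ (ρ δ₀ δ lam3 : ℝ) (dc : (ℕ →₀ ℤ) × ℤ → ℂ),
        0 < ρ → 0 < δ₀ → δ₀ ≤ ε → 0 < δ → δ ≤ ε * min δ₀ ρ →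
        |lam3 - 1| ≤ δ₀ →
        Summable (fun p => wt η ρ p * ‖dc p‖) →
        (∑' p : (ℕ →₀ ℤ) × ℤ, wt η ρ p * ‖dc p‖) ≤ δ →
        ∃ (mc : (ℕ →₀ ℤ) → ℂ) (ac : (ℕ →₀ ℤ) × ℤ → ℂ),
          (∀ φ : ℕ → ℝ, m3fn lam3 dc φ =
            ∑' ℓ : ℕ →₀ ℤ, mc ℓ * Complex.exp (Complex.I * ((odot φ ℓ : ℝ) : ℂ))) ∧
          (∀ ℓ, ac (ℓ, 0) = 0) ∧
          (∀ (φ : ℕ → ℝ) (x : ℝ),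
            (∑' p : (ℕ →₀ ℤ) × ℤ, Complex.I * (p.2 : ℂ) * ac p *
                Complex.exp (Complex.I * ((odot φ p.1 + (p.2 : ℝ) * x : ℝ) : ℂ))) =
              m3fn lam3 dc φ ^ ((1 : ℂ) / 3) *
                ((lam3 : ℂ) + realizeFn dc φ x) ^ (-(1 / 3 : ℂ)) - 1) ∧
          (∀ (φ : ℕ → ℝ) (x : ℝ),
            ((lam3 : ℂ) + realizeFn dc φ x) *
                (1 + ∑' p : (ℕ →₀ ℤ) × ℤ, Complex.I * (p.2 : ℂ) * ac p *
                  Complex.exp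
                    (Complex.I * ((odot φ p.1 + (p.2 : ℝ) * x : ℝ) : ℂ))) ^ 3 =
              m3fn lam3 dc φ) ∧
          Summable (fun ℓ : ℕ →₀ ℤ => Real.exp (ρ * wnorm η ℓ) *
            ‖mc ℓ - (if ℓ = 0 then (lam3 : ℂ) else 0)‖) ∧
          (∑' ℓ : ℕ →₀ ℤ, Real.exp (ρ * wnorm η ℓ) *
              ‖mc ℓ - (if ℓ = 0 then (lam3 : ℂ) else 0)‖) ≤ C * δ ∧
          Summable (fun p => wt η ρ p * ‖ac p‖) ∧
          (∑' p : (ℕ →₀ ℤ) × ℤ, wt η ρ p * ‖ac p‖) ≤ C * δ := by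
  obtain ⟨r0, hr0, K0, hK0, H0⟩ := ElimX.moser ElimX.an0 (by simp)
  obtain ⟨r1, hr1, K1, hK1, H1⟩ := ElimX.moser ElimX.an1 (by simp)
  obtain ⟨r2, hr2, K2, hK2, H2⟩ := ElimX.moser ElimX.an2 (by simp)
  obtain ⟨r3, hr3, hr31, H3⟩ := ElimX.exists_arg
  set C1 : ℝ := 2 * (2 * K0 * K2) with hC1
  set C2 : ℝ := 2 * K0 + K1 * (2 * K0) + K1 * (2 * K0) with hC2
  obtain ⟨e, he, he0, he1, he2, he3, he4⟩ : ∃ e > (0 : ℝ), e ≤ 1 / 4 ∧ 2 * e ≤ r0 ∧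
      2 * K0 * e ≤ r1 ∧ 2 * K0 * e ≤ r2 ∧ 2 * K0 * e ≤ r3 := by
    refine ⟨min (1 / 4) (min (r0 / 2) (min (r1 / (2 * K0)) (min (r2 / (2 * K0)) (r3 / (2 * K0))))),
      by positivity, min_le_left _ _, ?_, ?_, ?_, ?_⟩
    · rw [mul_comm, ← le_div_iff₀ (by norm_num)]; simp
    · rw [mul_comm, ← le_div_iff₀ (by positivity)]; simp
    · rw [mul_comm, ← le_div_iff₀ (by positivity)]; simp
    · rw [mul_comm, ← le_div_iff₀ (by positivity)]; simp
  refine ⟨C1 + C2, by positivity, e, he, ?_⟩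
  intro ρ δ₀ δ t dc hρ hδ₀ hδ₀e hδ hδle ht hsum htsum
  have hρ' := hρ.le
  have hδe : δ ≤ e := by
    refine hδle.trans (mul_le_of_le_one_right he.le ?_)
    exact (min_le_left _ _).trans (by linarith)
  have htl : 3 / 4 ≤ t := by have := (abs_le.1 ht).1; linarith
  have htu : t ≤ 5 / 4 := by have := (abs_le.1 ht).2; linarith
  have ht0 : 0 < t := by linarith
  have htC : (t : ℂ) ≠ 0 := by exact_mod_cast ht0.ne'
  have hd : ElimX.Rep η ρ (realizeFn dc) δ := by
    refine ⟨dc, hsum, htsum, fun φ x => ?_⟩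
    refine Summable.hasSum (f := fun p => dc p * ElimX.E p φ x) (Summable.of_norm ?_)
    refine (ElimX.summable_norm_of_wt (g := id) hρ' hsum).congr fun p => ?_
    rw [norm_mul, ElimX.norm_E, mul_one]
  have hz : ElimX.Rep η ρ (fun φ x => (t : ℂ)⁻¹ * realizeFn dc φ x) (2 * δ) := by
    refine (hd.smul ((t : ℂ)⁻¹)).congr (fun _ _ => rfl) ?_
    refine mul_le_mul_of_nonneg_right ?_ hδ.le
    rw [norm_inv, Complex.norm_real, Real.norm_of_nonneg ht0.le]
    exact (inv_anti₀ (by norm_num) htl).trans (by norm_num)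
  have hzn : ∀ φ x, 1 + (t : ℂ)⁻¹ * realizeFn dc φ x ≠ 0 := fun φ x =>
    ElimX.one_add_ne ((hz.norm_le hρ' φ x).trans_lt (by linarith))
  set v : (ℕ → ℝ) → ℝ → ℂ :=
    fun φ x => (1 + (t : ℂ)⁻¹ * realizeFn dc φ x) ^ (-(1 / 3 : ℂ)) - 1 with hv_def
  set M : ℝ := 2 * K0 * δ with hM_def
  have hM0 : 0 ≤ M := by positivity
  have hMe : M ≤ 2 * K0 * e := mul_le_mul_of_nonneg_left hδe (by positivity)
  have hv : ElimX.Rep η ρ v M :=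
    (H0 η ρ _ _ hρ' (by linarith) hz).congr (fun _ _ => rfl) (by rw [hM_def]; linarith)
  have hvb : ElimX.Rep η ρ (fun φ _ => ElimX.avg v φ) M := hv.avg hρ'
  have hvbn : ∀ φ, ‖ElimX.avg v φ‖ ≤ r3 := fun φ =>
    (hvb.norm_le hρ' φ 0).trans (by linarith)
  have hW : ∀ φ, 1 + ElimX.avg v φ ≠ 0 := fun φ =>
    ElimX.one_add_ne ((hvbn φ).trans_lt hr31)
  set L : ℂ := (t : ℂ) ^ (-(1 / 3 : ℂ)) with hL_def
  have hL0 : L ≠ 0 := by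
    rw [hL_def, Complex.cpow_ne_zero_iff]; exact Or.inl htC
  have hL3 : L ^ 3 = (t : ℂ)⁻¹ := by
    rw [hL_def, ← Complex.cpow_nat_mul, ← Complex.cpow_neg_one]
    norm_num
  have hLr : L = ((t ^ (-(1 / 3 : ℝ)) : ℝ) : ℂ) := by
    rw [hL_def, Complex.ofReal_cpow ht0.le]; norm_num
  have hh : ∀ φ x, ((t : ℂ) + realizeFn dc φ x) ^ (-(1 / 3 : ℂ)) = L * (1 + v φ x) := by
    intro φ x
    have h1 : (t : ℂ) + realizeFn dc φ x = t * (1 + (t : ℂ)⁻¹ * realizeFn dc φ x) := by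
      field_simp
    rw [h1, ElimX.cpow_scale ht0 (hzn φ x), hv_def]
    simp only [add_sub_cancel]
    rfl
  have hm : ∀ φ, m3fn t dc φ = ((L * (1 + ElimX.avg v φ))⁻¹) ^ 3 := by
    intro φ
    have h1 := ElimX.avg_affine φ (hv.continuous hρ' φ) (fun _ => L) (fun _ => 0)
    simp only [add_zero] at h1
    unfold m3fn
    simp only [hh]
    unfold ElimX.avg at h1 ⊢
    rw [h1, Complex.cpow_neg, inv_pow]
    congr 1
    exact_mod_cast Complex.cpow_natCast _ 3
  have hm2 : ∀ φ, m3fn t dc φ = t * ((1 + ElimX.avg v φ) ^ 3)⁻¹ := by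
    intro φ
    rw [hm, inv_pow, mul_pow, hL3, mul_inv, inv_inv]
  have hroot : ∀ φ, m3fn t dc φ ^ ((1 : ℂ) / 3) = (L * (1 + ElimX.avg v φ))⁻¹ := by
    intro φ
    have harg : (L * (1 + ElimX.avg v φ))⁻¹.arg = (1 + ElimX.avg v φ)⁻¹.arg := by
      have hp : 0 < (t ^ (-(1 / 3 : ℝ)))⁻¹ := by positivity
      rw [mul_inv, hLr, ← Complex.ofReal_inv, Complex.arg_real_mul _ hp]
    have h3 := H3 _ (hvbn φ)
    rw [← harg] at h3
    rw [hm]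
    have := Complex.pow_cpow_nat_inv (x := (L * (1 + ElimX.avg v φ))⁻¹) (n := 3) (by norm_num)
      (by exact_mod_cast h3.1) (by exact_mod_cast h3.2)
    rw [one_div]
    exact_mod_cast this
  have hprod : ∀ φ x, m3fn t dc φ ^ ((1 : ℂ) / 3) *
      ((t : ℂ) + realizeFn dc φ x) ^ (-(1 / 3 : ℂ)) - 1 =
      (1 + ElimX.avg v φ)⁻¹ * (1 + v φ x) + -1 := by
    intro φ x
    rw [hroot, hh]
    have := hW φ
    field_simp
    ring
  have hmRep : ElimX.Rep η ρ (fun φ _ => m3fn t dc φ - t) (C1 * δ) := by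
    refine ((H2 η ρ _ _ hρ' (by linarith) hvb).smul (t : ℂ)).congr (fun φ x => ?_) ?_
    · rw [hm2]; ring
    · rw [Complex.norm_real, Real.norm_of_nonneg ht0.le]
      have h5 : 0 ≤ K2 * M := by positivity
      have : C1 * δ = 2 * (K2 * M) := by rw [hC1, hM_def]; ring
      rw [this]
      nlinarith
  obtain ⟨cm, hcm1, hcm2, hcm3⟩ := hmRep.coeffs hρ'
  have haRep : ElimX.Rep η ρ (fun φ x => (1 + ElimX.avg v φ)⁻¹ * (1 + v φ x) + -1) (C2 * δ) := by
    have hi := H1 η ρ _ _ hρ' (by linarith) hvb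
    refine ((hv.add hi).add (hi.mul hρ' hv)).congr (fun φ x => ?_) ?_
    · ring
    · have hM1 : M ≤ 1 := by linarith
      have h5 : K1 * M * M ≤ K1 * M := mul_le_of_le_one_right (by positivity) hM1
      have : C2 * δ = M + K1 * M + K1 * M := by rw [hC2, hM_def]; ring
      rw [this]
      linarith
  obtain ⟨ac, ha0, ha1, ha2, ha3⟩ := haRep.antideriv hρ' (fun φ => by
    rw [ElimX.avg_affine φ (hv.continuous hρ' φ) (fun φ => (1 + ElimX.avg v φ)⁻¹) (fun _ => -1)]
    rw [inv_mul_cancel₀ (hW φ)]; ring)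
  have hC1δ : C1 * δ ≤ (C1 + C2) * δ := by
    have : 0 ≤ C2 * δ := by positivity
    linarith
  have hC2δ : C2 * δ ≤ (C1 + C2) * δ := by
    have : 0 ≤ C1 * δ := by positivity
    linarith
  have hA : ∀ (φ : ℕ → ℝ) (x : ℝ),
      (∑' p : (ℕ →₀ ℤ) × ℤ, Complex.I * (p.2 : ℂ) * ac p *
          Complex.exp (Complex.I * ((odot φ p.1 + (p.2 : ℝ) * x : ℝ) : ℂ))) =
        m3fn t dc φ ^ ((1 : ℂ) / 3) *
          ((t : ℂ) + realizeFn dc φ x) ^ (-(1 / 3 : ℂ)) - 1 := by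
    intro φ x
    rw [hprod]
    exact ha3 φ x
  refine ⟨fun ℓ => cm ℓ + if ℓ = 0 then (t : ℂ) else 0, ac, ?_, ha0, hA, ?_, ?_, ?_, ha1,
    ha2.trans hC2δ⟩
  · intro φ
    have h1 := hcm3 φ
    have h2 : HasSum (fun ℓ : ℕ →₀ ℤ => (if ℓ = 0 then (t : ℂ) else 0) *
        Complex.exp (Complex.I * ((odot φ ℓ : ℝ) : ℂ))) (t : ℂ) := by
      have := hasSum_single (f := fun ℓ : ℕ →₀ ℤ => (if ℓ = 0 then (t : ℂ) else 0) *
        Complex.exp (Complex.I * ((odot φ ℓ : ℝ) : ℂ))) 0 (fun b hb => by simp [hb])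
      simpa [ElimX.odot_zero] using this
    have h3 := h1.add h2
    rw [sub_add_cancel] at h3
    rw [← h3.tsum_eq]
    exact tsum_congr fun ℓ => by ring
  · intro φ x
    rw [hA, add_sub_cancel, hh, hroot, hm2]
    have h1 : (t : ℂ) + realizeFn dc φ x = ((L * (1 + v φ x)) ^ 3)⁻¹ := by
      rw [← hh, ← Complex.cpow_nat_mul]
      norm_num
      rw [Complex.cpow_neg_one, inv_inv]
    have h2 : 1 + v φ x ≠ 0 := by
      rw [hv_def]
      simp only [add_sub_cancel]
      rw [Complex.cpow_ne_zero_iff]; exact Or.inl (hzn φ x)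
    rw [h1]
    have := hW φ
    have h4 : (t : ℂ) = (L ^ 3)⁻¹ := by rw [hL3, inv_inv]
    rw [h4]
    field_simp
  · simpa only [add_sub_cancel_right] using hcm1
  · simpa only [add_sub_cancel_right] using hcm2.trans hC1δ
end
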